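/- Gleason's theorem for finite-dimensional matrix algebras: let n ≥ 3 and let m be a real-valued function on the set of orthogonal projections in M_n(ℂ) such that m(P) ∈ [0,1] for all projections P, m(I) = 1, and m(P + Q) = m(P) + m(Q) whenever P and Q are orthogonal projections with PQ = 0. Then there exists a unique density matrix ρ on ℂ^n such that m(P) = Tr(ρP) for every orthogonal projection P ∈ M_n(ℂ). -/

import Mathlib

/-!
Write `P_v` for the projection onto the line through `v`. The heart of the matter is that
`v ↦ ‖v‖² m(P_v)` is the diagonal of a Hermitian form.

*Reduction to `ℝ³`.* On the real span of a complex-orthonormal triple, `v ↦ m(P_v)` is a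
nonnegative frame function: its sum over orthogonal triples is constant (`isFrame_embed`). This is
where `n ≥ 3` enters.

*Frame functions on `ℝ³`.* Adding to a frame function `f` its quarter turn about the pole gives a
frame function `g` that is constant on the equator. If moreover `f` nearly attains its infimum at
the pole, then `g` almost increases as one goes down suitable great circles (`descent`). Hence `f`
is nearly constant near such a pole (`small_near_pole`), and smallness of the oscillation passes to
orthogonal points (`osc_orthogonal`), so a frame function bounded below is continuous and attains
its extrema. At an exact minimum the same monotonicity makes `g` rotation invariant and then, by
Cauchy's functional equation, quadratic (`quadratic_of_equator`). Choose axes with the maximum of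
`f` on the first and the minimum on the third, and subtract the diagonal quadratic form with the
same values on the axes. The difference changes sign under the quarter turns about those two axes,
which forces it to vanish (`zero_of_odd`). Thus `f` is a quadratic form (`real_gleason`).

*Back to `ℂⁿ`.* A function that is homogeneous, and quadratic on the real span of each orthonormal
pair, is quadratic on complex planes (`quadratic_on_plane`, `quadratic_on_span`), and the
Jordan–von Neumann argument yields a Hermitian form (`exists_form`), whose matrix is `ρ`. As every
projection is an orthogonal sum of line projections (`exists_eq_sum_lineProj`), additivity gives
`m(P) = Tr(ρP)`. Uniqueness holds because a nonzero Hermitian matrix is detected by the line of an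
eigenvector.
-/

open Matrix ComplexOrder

/-- A density matrix: positive semidefinite with trace 1. -/
def IsDensityMatrix {ι : Type*} [Fintype ι] [DecidableEq ι]
    (ρ : Matrix ι ι ℂ) : Prop :=
  ρ.PosSemidef ∧ ρ.trace = 1

/-- An orthogonal projection: a self-adjoint idempotent matrix. -/
def IsProjection {ι : Type*} [Fintype ι] (P : Matrix ι ι ℂ) : Prop :=
  Pᴴ = P ∧ P * P = P

namespace Gleason

open Filter Topology

/-! ### Frame functions on `ℝ³` -/

/-- Real three-dimensional Euclidean space. -/
abbrev E : Type := EuclideanSpace ℝ (Fin 3)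

/-- The vector of `ℝ³` with the given coordinates. -/
abbrev vec (x y z : ℝ) : E := !₂[x, y, z]

/-- A frame function of weight `W`: its values on any three mutually orthogonal nonzero vectors add
up to `W`. Vectors are not normalized; that `f` depends only on the line through a vector is a
consequence (`IsFrame.smul`), and the value at `0` is irrelevant. -/
def IsFrame (f : E → ℝ) (W : ℝ) : Prop :=
  ∀ a b c : E, a ≠ 0 → b ≠ 0 → c ≠ 0 → inner ℝ a b = 0 → inner ℝ a c = 0 → inner ℝ b c = 0 →
    f a + f b + f c = W

lemma inner_vec (x y z x' y' z' : ℝ) :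
    inner ℝ (vec x y z) (vec x' y' z') = x * x' + y * y' + z * z' := by
  simp [PiLp.inner_apply, Fin.sum_univ_three]; ring

lemma norm_vec_sq (x y z : ℝ) : ‖vec x y z‖ ^ 2 = x ^ 2 + y ^ 2 + z ^ 2 := by
  rw [← real_inner_self_eq_norm_sq, inner_vec]; ring

lemma vec_ne_zero {x y z : ℝ} (h : x ^ 2 + y ^ 2 + z ^ 2 ≠ 0) : vec x y z ≠ 0 := by
  intro h0
  apply h
  rw [← norm_vec_sq, h0]; simp

lemma vec_eta (v : E) : v = vec (v 0) (v 1) (v 2) := by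
  ext i; fin_cases i <;> rfl

lemma smul_vec (t x y z : ℝ) : t • vec x y z = vec (t * x) (t * y) (t * z) := by
  ext i; fin_cases i <;> rfl

lemma add_vec (x y z x' y' z' : ℝ) :
    vec x y z + vec x' y' z' = vec (x + x') (y + y') (z + z') := by
  ext i; fin_cases i <;> rfl

lemma IsFrame.vec {f : E → ℝ} {W : ℝ} (hf : IsFrame f W) {x y z x' y' z' x'' y'' z'' : ℝ}
    (h1 : x ^ 2 + y ^ 2 + z ^ 2 ≠ 0) (h2 : x' ^ 2 + y' ^ 2 + z' ^ 2 ≠ 0)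
    (h3 : x'' ^ 2 + y'' ^ 2 + z'' ^ 2 ≠ 0) (h12 : x * x' + y * y' + z * z' = 0)
    (h13 : x * x'' + y * y'' + z * z'' = 0) (h23 : x' * x'' + y' * y'' + z' * z'' = 0) :
    f (vec x y z) + f (vec x' y' z') + f (vec x'' y'' z'') = W :=
  hf _ _ _ (vec_ne_zero h1) (vec_ne_zero h2) (vec_ne_zero h3) (by rwa [inner_vec])
    (by rwa [inner_vec]) (by rwa [inner_vec])

lemma IsFrame.comp {f : E → ℝ} {W : ℝ} (hf : IsFrame f W) (T : E ≃ₗᵢ[ℝ] E) :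
    IsFrame (fun v => f (T v)) W := by
  intro a b c ha hb hc hab hac hbc
  exact hf _ _ _ (by simpa using ha) (by simpa using hb) (by simpa using hc)
    (by simpa using hab) (by simpa using hac) (by simpa using hbc)

lemma IsFrame.add {f g : E → ℝ} {W W' : ℝ} (hf : IsFrame f W) (hg : IsFrame g W') :
    IsFrame (fun v => f v + g v) (W + W') := by
  intro a b c ha hb hc hab hac hbc
  have := hf a b c ha hb hc hab hac hbc
  have := hg a b c ha hb hc hab hac hbc
  simp only; linarith

lemma IsFrame.neg {f : E → ℝ} {W : ℝ} (hf : IsFrame f W) : IsFrame (fun v => - f v) (-W) := by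
  intro a b c ha hb hc hab hac hbc
  have := hf a b c ha hb hc hab hac hbc
  simp only; linarith

lemma IsFrame.sub_const {f : E → ℝ} {W : ℝ} (hf : IsFrame f W) (k : ℝ) :
    IsFrame (fun v => f v - k) (W - 3 * k) := by
  intro a b c ha hb hc hab hac hbc
  have := hf a b c ha hb hc hab hac hbc
  simp only; linarith

/-- Any orthonormal pair can be rotated to the first and third coordinate axes. -/
lemma exists_isometry (p q : E) (hp : ‖p‖ = 1) (hq : ‖q‖ = 1) (hpq : inner ℝ p q = 0) :
    ∃ T : E ≃ₗᵢ[ℝ] E, T (vec 0 0 1) = p ∧ T (vec 1 0 0) = q := by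
  have hv : Orthonormal ℝ (({0, 2} : Set (Fin 3)).domRestrict (![q, 0, p] : Fin 3 → E)) := by
    rw [orthonormal_iff_ite]
    rintro ⟨i, hi⟩ ⟨j, hj⟩
    have hqp : inner ℝ q p = 0 := by rw [real_inner_comm]; exact hpq
    rcases hi with rfl | rfl <;> rcases hj with rfl | rfl <;>
      simp [hpq, hqp, hp, hq]
    all_goals exact fun h => absurd (congrArg Subtype.val h) (by decide)
  obtain ⟨b, hb⟩ := hv.exists_orthonormalBasis_extension_of_card_eq (by simp)
  refine ⟨b.repr.symm, ?_, ?_⟩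
  · have : vec 0 0 1 = EuclideanSpace.single (2 : Fin 3) (1 : ℝ) := by
      ext i; fin_cases i <;> simp
    rw [this, b.repr_symm_single, hb 2 (by simp)]; rfl
  · have : vec 1 0 0 = EuclideanSpace.single (0 : Fin 3) (1 : ℝ) := by
      ext i; fin_cases i <;> simp
    rw [this, b.repr_symm_single, hb 0 (by simp)]; rfl

/-- In a three-dimensional space two vectors have a common unit normal. -/
lemma exists_normal (p q : E) : ∃ r : E, ‖r‖ = 1 ∧ inner ℝ p r = 0 ∧ inner ℝ q r = 0 := by
  have hlt : Module.finrank ℝ (Submodule.span ℝ ({p, q} : Set E)) < Module.finrank ℝ E := by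
    have h1 := finrank_span_finset_le_card (R := ℝ) (M := E) ({p, q} : Finset E)
    have h2 := Finset.card_le_two (a := p) (b := q)
    have h3 : Module.finrank ℝ E = 3 := by simp
    rw [Finset.coe_pair, Set.finrank] at h1
    omega
  have hne : (Submodule.span ℝ ({p, q} : Set E))ᗮ ≠ ⊥ := by
    intro h
    rw [Submodule.orthogonal_eq_bot_iff] at h
    rw [h] at hlt
    simp at hlt
  obtain ⟨w, hw, hw0⟩ := Submodule.exists_mem_ne_zero_of_ne_bot hne
  refine ⟨‖w‖⁻¹ • w, ?_, ?_, ?_⟩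
  · rw [norm_smul]; simp [hw0]
  · rw [inner_smul_right, (Submodule.mem_orthogonal _ _).1 hw p (Submodule.subset_span (by simp))]
    simp
  · rw [inner_smul_right, (Submodule.mem_orthogonal _ _).1 hw q (Submodule.subset_span (by simp))]
    simp

lemma exists_pole (p : E) (hp : ‖p‖ = 1) : ∃ T : E ≃ₗᵢ[ℝ] E, T (vec 0 0 1) = p := by
  obtain ⟨r, hr, hpr, -⟩ := exists_normal p p
  obtain ⟨T, hT, -⟩ := exists_isometry p r hp hr hpr
  exact ⟨T, hT⟩

lemma IsFrame.smul {f : E → ℝ} {W : ℝ} (hf : IsFrame f W) {t : ℝ} (ht : t ≠ 0) (v : E)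
    (hv : v ≠ 0) : f (t • v) = f v := by
  obtain ⟨q, hq, hvq, -⟩ := exists_normal v v
  obtain ⟨r, hr, hvr, hqr⟩ := exists_normal v q
  have hq0 : q ≠ 0 := by rintro rfl; simp at hq
  have hr0 : r ≠ 0 := by rintro rfl; simp at hr
  have h1 := hf v q r hv hq0 hr0 hvq hvr hqr
  have h2 := hf (t • v) q r (smul_ne_zero ht hv) hq0 hr0 (by simp [inner_smul_left, hvq])
    (by simp [inner_smul_left, hvr]) hqr
  linarith

/-- Homogeneity in coordinates: proportional nonzero vectors have equal values. -/
lemma IsFrame.vec_eq {f : E → ℝ} {W : ℝ} (hf : IsFrame f W) {t x y z x' y' z' : ℝ} (ht : t ≠ 0)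
    (h : x ^ 2 + y ^ 2 + z ^ 2 ≠ 0) (hx : x' = t * x) (hy : y' = t * y) (hz : z' = t * z) :
    f (Gleason.vec x' y' z') = f (Gleason.vec x y z) := by
  rw [hx, hy, hz, ← smul_vec, hf.smul ht _ (vec_ne_zero h)]

/-- Rotation by a right angle about the third axis. -/
lemma exists_quarter_turn :
    ∃ R : E ≃ₗᵢ[ℝ] E, ∀ x y z, R (vec x y z) = vec (-y) x z := by
  let L : E →ₗ[ℝ] E :=
    { toFun := fun v => vec (-(v 1)) (v 0) (v 2)
      map_add' := by intro u v; rw [add_vec]; congr 1; simp [add_comm]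
      map_smul' := by intro t v; simp only [RingHom.id_apply]; rw [smul_vec]; simp }
  let LI : E →ₗᵢ[ℝ] E :=
    { L with
      norm_map' := by
        intro v
        have h : ‖vec (-(v 1)) (v 0) (v 2)‖ ^ 2 = ‖v‖ ^ 2 := by
          conv_rhs => rw [vec_eta v]
          rw [norm_vec_sq, norm_vec_sq]; ring
        exact (sq_eq_sq₀ (norm_nonneg _) (norm_nonneg _)).1 h }
  exact ⟨LI.toLinearIsometryEquiv rfl, fun x y z => rfl⟩

/-! ### Frame functions constant on the equator -/

section Equator

variable {g : E → ℝ} {W c : ℝ}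

/-- On the meridian through `v`, the values at `v` and at the orthogonal point add up to the
sum of the values at the pole and on the equator. -/
lemma meridian (hg : IsFrame g W) (hc : ∀ x y, x ^ 2 + y ^ 2 ≠ 0 → g (vec x y 0) = c)
    {x y z : ℝ} (h : x ^ 2 + y ^ 2 ≠ 0) :
    g (vec x y z) + g (vec (-z * x) (-z * y) (x ^ 2 + y ^ 2)) = g (vec 0 0 1) + c := by
  have hpos : 0 < x ^ 2 + y ^ 2 := lt_of_le_of_ne (by positivity) (Ne.symm h)
  have h1 := hg.vec (x := x) (y := y) (z := z) (x' := -z * x) (y' := -z * y)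
    (z' := x ^ 2 + y ^ 2) (x'' := -y) (y'' := x) (z'' := 0)
    (by positivity) (by positivity) (by nlinarith) (by ring) (by ring) (by ring)
  have h2 := hg.vec (x := 0) (y := 0) (z := 1) (x' := x) (y' := y)
    (z' := 0) (x'' := -y) (y'' := x) (z'' := 0)
    (by norm_num) (by simpa using h) (by nlinarith) (by ring) (by ring) (by ring)
  rw [hc x y h] at h2
  linarith

/-- If the value at the pole is within `κ` of a lower bound, then the constant value on the equator is
within `κ` of an upper bound. -/
lemma le_of_pole (hg : IsFrame g W) (hc : ∀ x y, x ^ 2 + y ^ 2 ≠ 0 → g (vec x y 0) = c)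
    {k κ : ℝ} (hk : ∀ v, v ≠ 0 → k ≤ g v) (hκ : g (vec 0 0 1) - k ≤ κ) (v : E) (hv : v ≠ 0) :
    g v ≤ c + κ := by
  rw [vec_eta v]
  by_cases h : (v 0) ^ 2 + (v 1) ^ 2 = 0
  · have h0 : v 0 = 0 := by nlinarith [sq_nonneg (v 0), sq_nonneg (v 1)]
    have h1 : v 1 = 0 := by nlinarith [sq_nonneg (v 0), sq_nonneg (v 1)]
    have h2 : v 2 ≠ 0 := by
      intro h2; apply hv; rw [vec_eta v, h0, h1, h2]; ext i; fin_cases i <;> rfl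
    have h3 := hg.vec_eq (x := 0) (y := 0) (z := 1) (x' := v 0) (y' := v 1) (z' := v 2) h2
      (by norm_num) (by simp [h0]) (by simp [h1]) (by simp)
    rw [h3]
    have := hc 1 0 (by norm_num)
    have := hk (vec 1 0 0) (vec_ne_zero (by norm_num))
    linarith
  · have h1 := meridian hg hc (z := v 2) h
    have hpos : 0 < (v 0) ^ 2 + (v 1) ^ 2 := lt_of_le_of_ne (by positivity) (Ne.symm h)
    have := hk (vec (-(v 2) * (v 0)) (-(v 2) * (v 1)) ((v 0) ^ 2 + (v 1) ^ 2))
      (vec_ne_zero (by positivity))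
    linarith

/-- The point `(a, b, 1)` is the highest one on the great circle joining it to `(-b, a, 0)`. No value
along that circle is smaller than the value at `(a, b, 1)` by more than `κ`. -/
lemma descent (hg : IsFrame g W) (hc : ∀ x y, x ^ 2 + y ^ 2 ≠ 0 → g (vec x y 0) = c) {κ : ℝ}
    (hκ : ∀ v, v ≠ 0 → g v ≤ c + κ) {a b : ℝ} (hab : a ^ 2 + b ^ 2 ≠ 0) (t : ℝ) :
    g (vec a b 1) ≤ g (vec (a - t * b) (b + t * a) 1) + κ := by
  have hpos : 0 < a ^ 2 + b ^ 2 := lt_of_le_of_ne (by positivity) (Ne.symm hab)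
  set r := a ^ 2 + b ^ 2 with hr
  have hn : a ^ 2 + b ^ 2 + (-r) ^ 2 ≠ 0 := by positivity
  have hy : (-(1 + r) * b - t * r * a) ^ 2 + ((1 + r) * a - t * r * b) ^ 2 + (-(t * r)) ^ 2 ≠ 0 := by
    have : (-(1 + r) * b - t * r * a) ^ 2 + ((1 + r) * a - t * r * b) ^ 2 + (-(t * r)) ^ 2
      = ((1 + r) ^ 2 + (t * r) ^ 2) * r + (t * r) ^ 2 := by rw [hr]; ring
    rw [this]; positivity
  have h1 := hg.vec (x := a) (y := b) (z := 1) (x' := -b) (y' := a) (z' := 0)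
    (x'' := a) (y'' := b) (z'' := -r) (by positivity) (by nlinarith) hn
    (by ring) (by rw [hr]; ring) (by ring)
  have h2 := hg.vec (x := a - t * b) (y := b + t * a) (z := 1)
    (x' := -(1 + r) * b - t * r * a) (y' := (1 + r) * a - t * r * b) (z' := -(t * r))
    (x'' := a) (y'' := b) (z'' := -r) (by positivity) hy hn
    (by rw [hr]; ring) (by rw [hr]; ring) (by rw [hr]; ring)
  rw [hc (-b) a (by nlinarith)] at h1
  have h3 := hκ _ (vec_ne_zero hy)
  linarith

/-- In the plane at height one, two steps of `descent` reach from `(a, b)` every point whose component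
along `(a, b)` is at least that of `(a, b)` itself: the complex number `A + iB` factors as
`(1 + iλ)(1 + iμ)` with real `λ`, `μ`. -/
lemma descent_two (hg : IsFrame g W) (hc : ∀ x y, x ^ 2 + y ^ 2 ≠ 0 → g (vec x y 0) = c) {κ : ℝ}
    (hκ : ∀ v, v ≠ 0 → g v ≤ c + κ) {a b : ℝ} (hab : a ^ 2 + b ^ 2 ≠ 0) {A B : ℝ} (hA : 1 ≤ A) :
    g (vec a b 1) ≤ g (vec (A * a - B * b) (A * b + B * a) 1) + 2 * κ := by
  set d := Real.sqrt (B ^ 2 + 4 * (A - 1)) with hd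
  have hdd : d ^ 2 = B ^ 2 + 4 * (A - 1) := Real.sq_sqrt (by nlinarith [sq_nonneg B])
  set l := (B + d) / 2 with hl
  set μ := (B - d) / 2 with hμ
  have hs : l + μ = B := by rw [hl, hμ]; ring
  have hp : 1 - l * μ = A := by rw [hl, hμ]; nlinarith
  have h1 := descent hg hc hκ hab l
  have hpos : 0 < a ^ 2 + b ^ 2 := lt_of_le_of_ne (by positivity) (Ne.symm hab)
  have hab' : (a - l * b) ^ 2 + (b + l * a) ^ 2 ≠ 0 := by
    have : (a - l * b) ^ 2 + (b + l * a) ^ 2 = (1 + l ^ 2) * (a ^ 2 + b ^ 2) := by ring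
    rw [this]; positivity
  have h2 := descent hg hc hκ hab' μ
  have e1 : a - l * b - μ * (b + l * a) = A * a - B * b := by rw [← hs, ← hp]; ring
  have e2 : b + l * a + μ * (a - l * b) = A * b + B * a := by rw [← hs, ← hp]; ring
  rw [e1, e2] at h2
  linarith

end Equator

/-! ### Continuity of bounded frame functions -/

/-- A nonnegative frame function that is small at the pole is small near the pole. The sum `g` of `f`
and its quarter turn is constant on the equator, and its increment `δ` from `Z ρ` to `(r, ρ, 1)` does
not depend on `ρ`. Such jumps for `ρ = 1, 2, 4, …, 2 ^ N`, with a descent from `(r, ρ, 1)` to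
`Z (2 * ρ)` between consecutive ones, raise `g` by `(N + 1) * δ` up to multiples of the value at the
pole. Since `g` is bounded, `δ` is of order `1 / N`. -/
lemma small_near_pole {f : E → ℝ} {W : ℝ} (hf : IsFrame f W) (hpos : ∀ v, v ≠ 0 → 0 ≤ f v)
    (N : ℕ) {r : ℝ} (hr0 : 0 < r) (hr : 10 * 2 ^ N * r ≤ 1) :
    f (vec r 0 1) ≤ 6 * f (vec 0 0 1) + 2 * W / (N + 1) := by
  obtain ⟨R, hR⟩ := exists_quarter_turn
  set η := f (vec 0 0 1) with hη
  set g : E → ℝ := fun v => f v + f (R v) with hgdef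
  have hg : IsFrame g (W + W) := hf.add (hf.comp R)
  have hgpos : ∀ v, v ≠ 0 → 0 ≤ g v := fun v hv =>
    add_nonneg (hpos v hv) (hpos _ (by simpa using hv))
  set c := W - η with hcdef
  have hc : ∀ x y, x ^ 2 + y ^ 2 ≠ 0 → g (vec x y 0) = c := by
    intro x y h
    have := hf.vec (x := x) (y := y) (z := 0) (x' := -y) (y' := x) (z' := 0)
      (x'' := 0) (y'' := 0) (z'' := 1) (by simpa using h) (by intro h'; apply h; linarith)
      (by norm_num) (by ring) (by ring) (by ring)
    simp only [hgdef, hR, hcdef, hη]; linarith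
  have hpole : g (vec 0 0 1) = 2 * η := by
    simp only [hgdef, hR, neg_zero, hη]; ring
  have hκ : ∀ v, v ≠ 0 → g v ≤ c + 2 * η :=
    le_of_pole hg hc hgpos (by rw [hpole]; linarith)
  set δ := g (vec r 0 1) - 2 * η with hδ
  set Z : ℝ → E := fun ρ => vec (-ρ ^ 2 * r) (ρ * (1 + r ^ 2)) (ρ ^ 2 * r ^ 2 + (1 + r ^ 2) ^ 2)
    with hZ
  have hZ0 : ∀ ρ, Z ρ ≠ 0 := fun ρ => vec_ne_zero (by positivity)
  -- the increment of `g` from `Z ρ` to the nearby point `(r, ρ, 1)` is independent of `ρ`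
  have hjump : ∀ ρ : ℝ, g (vec r ρ 1) = g (Z ρ) + δ := by
    intro ρ
    have h1 := hg.vec (x := r) (y := 0) (z := 1) (x' := 0) (y' := 1) (z' := 0)
      (x'' := 1) (y'' := 0) (z'' := -r) (by positivity) (by norm_num) (by positivity)
      (by ring) (by ring) (by ring)
    have h2 := hg.vec (x := r) (y := ρ) (z := 1) (x' := -ρ * r) (y' := 1 + r ^ 2) (z' := -ρ)
      (x'' := 1) (y'' := 0) (z'' := -r) (by positivity) (by positivity) (by positivity)
      (by ring) (by ring) (by ring)
    have h3 := meridian hg hc (x := -ρ * r) (y := 1 + r ^ 2) (z := -ρ) (by positivity)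
    have e : vec (- -ρ * (-ρ * r)) (- -ρ * (1 + r ^ 2)) ((-ρ * r) ^ 2 + (1 + r ^ 2) ^ 2) = Z ρ := by
      simp only [hZ]; congr 1 <;> ring
    rw [e, hpole] at h3
    rw [hc 0 1 (by norm_num)] at h1
    rw [hδ]; linarith
  -- `Z (2 * ρ)` can be reached from `(r, ρ, 1)` by two descents
  have hstep : ∀ ρ : ℝ, 1 ≤ ρ → 10 * ρ * r ≤ 1 → g (vec r ρ 1) ≤ g (Z (2 * ρ)) + 4 * η := by
    intro ρ hρ hρr
    have hYpos : 0 < r ^ 2 + ρ ^ 2 := by positivity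
    set D := (2 * ρ) ^ 2 * r ^ 2 + (1 + r ^ 2) ^ 2 with hD
    have hDpos : 0 < D := by positivity
    set z1 := (-(2 * ρ) ^ 2 * r) / D with hz1
    set z2 := (2 * ρ * (1 + r ^ 2)) / D with hz2
    have hzz : g (Z (2 * ρ)) = g (vec z1 z2 1) := by
      refine hg.vec_eq hDpos.ne' (by positivity) ?_ ?_ ?_
      · rw [hz1]; field_simp
      · rw [hz2]; field_simp
      · ring
    have hA : 1 ≤ (z1 * r + z2 * ρ) / (r ^ 2 + ρ ^ 2) := by
      rw [le_div_iff₀ hYpos, one_mul]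
      have : z1 * r + z2 * ρ = (2 * ρ ^ 2 * (1 - r ^ 2)) / D := by
        rw [hz1, hz2]; field_simp; ring
      rw [this, le_div_iff₀ hDpos]
      have hsmall : ρ ^ 2 * r ^ 2 ≤ 1 / 100 := by
        have h0 : 0 ≤ ρ * r := by positivity
        nlinarith
      have hr2 : r ^ 2 ≤ 1 / 100 := by nlinarith [sq_nonneg r]
      have hD2 : D ≤ 11 / 10 := by rw [hD]; nlinarith [sq_nonneg r]
      have hY2 : r ^ 2 + ρ ^ 2 ≤ 101 / 100 * ρ ^ 2 := by nlinarith
      calc (r ^ 2 + ρ ^ 2) * D ≤ (101 / 100 * ρ ^ 2) * (11 / 10) := by gcongr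
        _ ≤ 2 * ρ ^ 2 * (1 - r ^ 2) := by nlinarith [sq_nonneg ρ]
    have h := descent_two hg hc hκ (a := r) (b := ρ) hYpos.ne'
      (B := (z2 * r - z1 * ρ) / (r ^ 2 + ρ ^ 2)) hA
    have e1 : (z1 * r + z2 * ρ) / (r ^ 2 + ρ ^ 2) * r
        - (z2 * r - z1 * ρ) / (r ^ 2 + ρ ^ 2) * ρ = z1 := by field_simp; ring
    have e2 : (z1 * r + z2 * ρ) / (r ^ 2 + ρ ^ 2) * ρ
        + (z2 * r - z1 * ρ) / (r ^ 2 + ρ ^ 2) * r = z2 := by field_simp; ring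
    rw [e1, e2] at h
    rw [hzz]; linarith
  have hchain : ∀ k : ℕ, k ≤ N → (k + 1) * δ - 4 * η * k ≤ g (vec r (2 ^ k) 1) := by
    intro k
    induction k with
    | zero =>
      intro _
      have := hjump (2 ^ 0)
      have := hgpos _ (hZ0 (2 ^ 0))
      push_cast; linarith
    | succ k ih =>
      intro hk
      have h1 := ih (by omega)
      have h2 : (1 : ℝ) ≤ 2 ^ k := one_le_pow₀ (by norm_num)
      have h3 : (2 : ℝ) ^ k ≤ 2 ^ N := pow_le_pow_right₀ (by norm_num) (by omega)
      have h4 := hstep (2 ^ k) h2 (by nlinarith)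
      have h5 := hjump (2 * 2 ^ k)
      rw [pow_succ']
      push_cast; linarith
  have hN := hchain N le_rfl
  have hup := hκ (vec r (2 ^ N) 1) (vec_ne_zero (by positivity))
  have hη0 : 0 ≤ η := hpos _ (vec_ne_zero (by norm_num))
  have hηW : η ≤ W := by
    have h1 := hgpos (vec 1 0 0) (vec_ne_zero (by norm_num))
    rw [hc 1 0 (by norm_num)] at h1
    linarith
  have hN0 : (0 : ℝ) < N + 1 := by positivity
  have hδle : δ ≤ 4 * η + 2 * W / (N + 1) := by
    have : δ * (N + 1) ≤ (4 * η + 2 * W / (N + 1)) * (N + 1) := by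
      have e : (4 * η + 2 * W / (N + 1)) * (N + 1) = 4 * η * (N + 1) + 2 * W := by field_simp
      rw [e]; nlinarith
    exact le_of_mul_le_mul_right this hN0
  have hfg : f (vec r 0 1) ≤ g (vec r 0 1) := by
    have : 0 ≤ f (R (vec r 0 1)) := hpos _ (by simp)
    simp only [hgdef]; linarith
  linarith

/-- The function `f` varies by at most `ε` near `p`, measured in the plane tangent at `p`. -/
def Osc (f : E → ℝ) (p : E) (ε : ℝ) : Prop :=
  ∃ δ > 0, ∀ w, inner ℝ p w = 0 → ‖w‖ < δ → |f (p + w) - f p| ≤ ε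

lemma Osc.of_comp {f : E → ℝ} (T : E ≃ₗᵢ[ℝ] E) {p : E} {ε : ℝ}
    (h : Osc (fun v => f (T v)) p ε) : Osc f (T p) ε := by
  obtain ⟨δ, hδ, h⟩ := h
  refine ⟨δ, hδ, fun w hw hwδ => ?_⟩
  have := h (T.symm w) (by rw [← T.inner_map_map]; simpa using hw) (by simpa using hwδ)
  simpa using this

lemma Osc.comp {f : E → ℝ} (T : E ≃ₗᵢ[ℝ] E) {p : E} {ε : ℝ}
    (h : Osc f (T p) ε) : Osc (fun v => f (T v)) p ε := by
  obtain ⟨δ, hδ, h⟩ := h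
  refine ⟨δ, hδ, fun w hw hwδ => ?_⟩
  have := h (T w) (by simpa using hw) (by simpa using hwδ)
  simpa using this

lemma norm_vec_le (a b : ℝ) : ‖vec a b 0‖ ≤ |a| + |b| := by
  have h := norm_vec_sq a b 0
  have : ‖vec a b 0‖ ^ 2 ≤ (|a| + |b|) ^ 2 := by
    rw [h, add_sq, sq_abs, sq_abs]
    have := mul_nonneg (abs_nonneg a) (abs_nonneg b)
    nlinarith
  exact (sq_le_sq₀ (norm_nonneg _) (by positivity)).1 this

/-- Control of the oscillation at a point yields control at each orthogonal point. -/
lemma osc_orthogonal_aux {f : E → ℝ} {W : ℝ} (hf : IsFrame f W) {ε : ℝ} (hε : 0 ≤ ε)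
    (h : Osc f (vec 0 0 1) ε) : Osc f (vec 1 0 0) (4 * ε) := by
  obtain ⟨δ, hδ, h⟩ := h
  have H : ∀ a b : ℝ, |a| + |b| < δ → |f (vec a b 1) - f (vec 0 0 1)| ≤ ε := by
    intro a b hab
    have := h (vec a b 0) (by rw [inner_vec]; ring) ((norm_vec_le a b).trans_lt hab)
    rwa [add_vec, zero_add, zero_add, add_zero] at this
  -- moving along a meridian
  have H1 : ∀ s t : ℝ, 2 * |t| < δ → |f (vec 1 s t) - f (vec 1 s 0)| ≤ ε := by
    intro s t ht
    have hs : 0 < 1 + s ^ 2 := by positivity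
    have h1 := hf.vec (x := 1) (y := s) (z := t) (x' := -t) (y' := -t * s) (z' := 1 + s ^ 2)
      (x'' := -s) (y'' := 1) (z'' := 0) (by positivity) (by positivity) (by positivity)
      (by ring) (by ring) (by ring)
    have h2 := hf.vec (x := 1) (y := s) (z := 0) (x' := 0) (y' := 0) (z' := 1)
      (x'' := -s) (y'' := 1) (z'' := 0) (by positivity) (by positivity) (by positivity)
      (by ring) (by ring) (by ring)
    have h3 := hf.vec_eq (x := -t / (1 + s ^ 2)) (y := -t * s / (1 + s ^ 2)) (z := 1)
      (x' := -t) (y' := -t * s) (z' := 1 + s ^ 2) hs.ne' (by positivity)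
      (by field_simp) (by field_simp) (by ring)
    have hb1 : |-t / (1 + s ^ 2)| ≤ |t| := by
      rw [abs_div, abs_neg, abs_of_pos hs]
      exact div_le_self (abs_nonneg _) (by nlinarith [sq_nonneg s])
    have hb2 : |-t * s / (1 + s ^ 2)| ≤ |t| := by
      rw [abs_div, abs_mul, abs_neg, abs_of_pos hs, div_le_iff₀ hs]
      have : |s| ≤ 1 + s ^ 2 := by nlinarith [sq_abs s, sq_nonneg (|s| - 1), abs_nonneg s]
      exact mul_le_mul_of_nonneg_left this (abs_nonneg _)
    have h4 := H (-t / (1 + s ^ 2)) (-t * s / (1 + s ^ 2)) (by linarith)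
    rw [← h3] at h4
    have e : f (vec 1 s t) - f (vec 1 s 0)
      = -(f (vec (-t) (-t * s) (1 + s ^ 2)) - f (vec 0 0 1)) := by linarith
    rw [e, abs_neg]; exact h4
  have H2 : ∀ s t : ℝ, t ≠ 0 → |(s ^ 2 + t ^ 2) / t| + |s / t| < δ →
      |f (vec 1 s t) - f (vec 1 0 0)| ≤ 2 * ε := by
    intro s t ht hst
    have h1 := hf.vec (x := 1) (y := 0) (z := 0) (x' := 0) (y' := s) (z' := t)
      (x'' := 0) (y'' := -t) (z'' := s) (by positivity) (by positivity) (by rw [neg_sq]; positivity)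
      (by ring) (by ring) (by ring)
    have h2 := hf.vec (x := 1) (y := s) (z := t) (x' := -(s ^ 2 + t ^ 2)) (y' := s) (z' := t)
      (x'' := 0) (y'' := -t) (z'' := s) (by positivity) (by positivity) (by rw [neg_sq]; positivity)
      (by ring) (by ring) (by ring)
    have h3 := hf.vec_eq (x := 0) (y := s / t) (z := 1)
      (x' := 0) (y' := s) (z' := t) ht (by positivity) (by ring) (by field_simp) (by ring)
    have h4 := hf.vec_eq (x := -((s ^ 2 + t ^ 2) / t)) (y := s / t) (z := 1)
      (x' := -(s ^ 2 + t ^ 2)) (y' := s) (z' := t) ht (by positivity) (by field_simp)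
      (by field_simp) (by ring)
    have h5 := H 0 (s / t) (by rw [abs_zero]; linarith [abs_nonneg ((s ^ 2 + t ^ 2) / t)])
    have h6 := H (-((s ^ 2 + t ^ 2) / t)) (s / t) (by rwa [abs_neg])
    rw [← h3] at h5
    rw [← h4] at h6
    rw [abs_le] at *
    constructor <;> linarith
  -- the slope `L` of the auxiliary great circle is fixed, steep enough to pass near the pole
  obtain ⟨L, hL0, hL⟩ : ∃ L : ℝ, 0 < L ∧ 1 / L < δ / 4 :=
    ⟨5 / δ, by positivity, by rw [one_div_div]; linarith⟩
  set δ' := min (δ / (4 * L)) (δ / (4 * ((1 + L ^ 2) / L))) with hδ'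
  have hδ'0 : 0 < δ' := by rw [hδ']; positivity
  have H3 : ∀ s : ℝ, |s| < δ' → |f (vec 1 s 0) - f (vec 1 0 0)| ≤ 3 * ε := by
    intro s hs
    rcases eq_or_ne s 0 with rfl | hs0
    · simpa using hε
    have hs1 : |s| * (4 * L) < δ := by
      rw [← lt_div_iff₀ (by positivity)]; exact hs.trans_le (min_le_left _ _)
    have hs2 : |s| * (4 * ((1 + L ^ 2) / L)) < δ := by
      rw [← lt_div_iff₀ (by positivity)]; exact hs.trans_le (min_le_right _ _)
    have ht : L * s ≠ 0 := mul_ne_zero hL0.ne' hs0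
    have h1 := H1 s (L * s) (by rw [abs_mul, abs_of_pos hL0]; nlinarith [abs_nonneg s])
    have e1 : (s ^ 2 + (L * s) ^ 2) / (L * s) = s * ((1 + L ^ 2) / L) := by field_simp
    have e2 : s / (L * s) = 1 / L := by field_simp
    have h2 := H2 s (L * s) ht (by
      rw [e1, e2, abs_mul, abs_of_pos (show 0 < (1 + L ^ 2) / L by positivity),
        abs_of_pos (show 0 < 1 / L by positivity)]
      nlinarith)
    rw [abs_le] at *
    constructor <;> linarith
  refine ⟨min δ' (δ / 2), by positivity, fun w hw hwδ => ?_⟩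
  rw [vec_eta w, inner_vec] at hw
  have hw0 : w 0 = 0 := by linarith
  have hn1 : |w 1| ≤ ‖w‖ := PiLp.norm_apply_le w 1
  have hn2 : |w 2| ≤ ‖w‖ := PiLp.norm_apply_le w 2
  have hw1 := hwδ.trans_le (min_le_left _ _)
  have hw2 := hwδ.trans_le (min_le_right _ _)
  have e : vec 1 0 0 + w = vec 1 (w 1) (w 2) := by
    rw [vec_eta w, add_vec, hw0]; simp
  rw [e]
  have h1 := H1 (w 1) (w 2) (by linarith)
  have h2 := H3 (w 1) (by linarith)
  rw [abs_le] at *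
  constructor <;> linarith

lemma osc_orthogonal {f : E → ℝ} {W : ℝ} (hf : IsFrame f W) {ε : ℝ} (hε : 0 ≤ ε) {p q : E}
    (hp : ‖p‖ = 1) (hq : ‖q‖ = 1) (hpq : inner ℝ p q = 0) (h : Osc f p ε) : Osc f q (4 * ε) := by
  obtain ⟨T, hTp, hTq⟩ := exists_isometry p q hp hq hpq
  rw [← hTq]
  rw [← hTp] at h
  exact (osc_orthogonal_aux (hf.comp T) hε h.comp).of_comp

/-- The oscillation is small at a point where `f` nearly attains its infimum, hence at the common
normal of that point and `q`, hence at `q`. -/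
lemma osc_all {f : E → ℝ} {W k : ℝ} (hf : IsFrame f W) (hk : ∀ v, v ≠ 0 → k ≤ f v) {ε : ℝ}
    (hε : 0 < ε) {q : E} (hq : ‖q‖ = 1) : Osc f q ε := by
  -- the infimum of `f` over nonzero vectors
  set S := f '' {v | v ≠ 0} with hS
  have hSne : S.Nonempty := ⟨_, vec 0 0 1, vec_ne_zero (by norm_num), rfl⟩
  have hSb : BddBelow S := ⟨k, by rintro _ ⟨v, hv, rfl⟩; exact hk v hv⟩
  set i := sInf S with hi
  have hi' : ∀ v, v ≠ 0 → i ≤ f v := fun v hv => csInf_le hSb ⟨v, hv, rfl⟩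
  set W' := W - 3 * i with hW'
  obtain ⟨N, hN⟩ : ∃ N : ℕ, 2 * W' / (N + 1) ≤ ε / 100 := by
    obtain ⟨N, hN⟩ := exists_nat_ge (2 * W' / (ε / 100))
    refine ⟨N, ?_⟩
    rw [div_le_iff₀ (by positivity)] at hN ⊢
    nlinarith
  obtain ⟨_, ⟨p₀, hp₀, rfl⟩, hlt⟩ := exists_lt_of_csInf_lt hSne
    (show i < i + ε / 1000 by linarith)
  set p := ‖p₀‖⁻¹ • p₀ with hpdef
  have hp : ‖p‖ = 1 := by
    rw [hpdef, norm_smul]; simp [show p₀ ≠ 0 from hp₀]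
  have hfp : f p < i + ε / 1000 := by
    rw [hpdef, hf.smul (by simpa using hp₀) _ hp₀]; exact hlt
  have hosc : Osc f p (ε / 16) := by
    refine ⟨1 / (10 * 2 ^ N), by positivity, fun w hw hwδ => ?_⟩
    rcases eq_or_ne w 0 with rfl | hw0
    · simp; positivity
    have hwn : 0 < ‖w‖ := norm_pos_iff.2 hw0
    obtain ⟨T, hTp, hTq⟩ := exists_isometry p (‖w‖⁻¹ • w) hp
      (by rw [norm_smul]; simp [hw0]) (by rw [inner_smul_right, hw, mul_zero])
    have hTw : T (vec ‖w‖ 0 1) = p + w := by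
      have : vec ‖w‖ 0 1 = vec 0 0 1 + ‖w‖ • vec 1 0 0 := by
        rw [smul_vec, add_vec]; simp
      rw [this, map_add, map_smul, hTp, hTq, smul_smul, mul_inv_cancel₀ hwn.ne', one_smul]
    have h := small_near_pole ((hf.sub_const i).comp T)
      (fun v hv => sub_nonneg.2 (hi' _ (by simpa using hv))) N hwn (by
        rw [lt_div_iff₀ (by positivity)] at hwδ; linarith)
    rw [hTw, hTp] at h
    have hpw : p + w ≠ 0 := by
      rw [← hTw]; simp
    have h1 := hi' _ hpw
    have h2 := hi' p (by rintro h; rw [h] at hp; simp at hp)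
    rw [abs_le]
    constructor <;> linarith
  obtain ⟨r, hr, hpr, hqr⟩ := exists_normal p q
  have h1 := osc_orthogonal hf (by positivity) hp hr hpr hosc
  have h2 := osc_orthogonal hf (by positivity) hr hq (by rwa [real_inner_comm]) h1
  convert h2 using 1
  ring

lemma IsFrame.continuousAt {f : E → ℝ} {W k : ℝ} (hf : IsFrame f W) (hk : ∀ v, v ≠ 0 → k ≤ f v)
    {v : E} (hv : v ≠ 0) : ContinuousAt f v := by
  have hunit : ∀ p : E, ‖p‖ = 1 → ContinuousAt f p := by
    intro p hp
    rw [Metric.continuousAt_iff']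
    intro ε hε
    obtain ⟨δ, hδ, h⟩ := osc_all hf hk (half_pos hε) hp
    have hpp : inner ℝ p p = (1 : ℝ) := by rw [real_inner_self_eq_norm_sq, hp]; norm_num
    have hne : ∀ᶠ u in 𝓝 p, inner ℝ p u ≠ (0 : ℝ) := by
      have : ContinuousAt (fun u : E => inner ℝ p u) p := by fun_prop
      exact this.eventually_ne (by rw [hpp]; norm_num)
    have hsm : ∀ᶠ u in 𝓝 p, ‖(inner ℝ p u)⁻¹ • u - p‖ < δ := by
      have : ContinuousAt (fun u : E => ‖(inner ℝ p u)⁻¹ • u - p‖) p := by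
        have h1 : ContinuousAt (fun u : E => (inner ℝ p u)⁻¹) p :=
          ContinuousAt.inv₀ (by fun_prop) (by rw [hpp]; norm_num)
        fun_prop
      refine this.eventually_lt continuousAt_const ?_
      simpa only [hpp, inv_one, one_smul, sub_self, norm_zero] using hδ
    filter_upwards [hne, hsm] with u hu1 hu2
    have h1 := h ((inner ℝ p u)⁻¹ • u - p)
      (by rw [inner_sub_right, inner_smul_right, hpp, inv_mul_cancel₀ hu1, sub_self]) hu2
    have hu0 : u ≠ 0 := by rintro rfl; simp at hu1
    rw [add_sub_cancel, hf.smul (inv_ne_zero hu1) _ hu0] at h1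
    rw [Real.dist_eq]; linarith
  have hn : ‖v‖⁻¹ ≠ 0 := by simpa using hv
  have h1 := hunit (‖v‖⁻¹ • v) (by rw [norm_smul]; simp [hv])
  have h2 : ContinuousAt (fun u => f (‖v‖⁻¹ • u)) v :=
    ContinuousAt.comp (f := fun u : E => ‖v‖⁻¹ • u) (g := f) h1 (by fun_prop)
  refine h2.congr ?_
  filter_upwards [isOpen_ne.mem_nhds hv] with u hu
  exact hf.smul hn u hu

/-! ### Rotational symmetry about a minimum -/

/-- A bounded function additive on `[0, 1]` is linear: the difference `D` from linear satisfies
`D (2a) = 2 D a`, or `D (2a - 1) = 2 D a`, so it would be unbounded if nonzero. -/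
lemma linear_of_additive {χ : ℝ → ℝ} {B : ℝ}
    (hadd : ∀ a b, 0 ≤ a → 0 ≤ b → a + b ≤ 1 → χ (a + b) = χ a + χ b)
    (hB : ∀ a, 0 ≤ a → a ≤ 1 → |χ a| ≤ B) {a : ℝ} (ha0 : 0 ≤ a) (ha1 : a ≤ 1) :
    χ a = a * χ 1 := by
  have key : ∀ k : ℕ, ∀ a, 0 ≤ a → a ≤ 1 → |χ a - a * χ 1| * 2 ^ k ≤ 2 * B := by
    intro k
    induction k with
    | zero =>
      intro a h0 h1
      have e1 := hB a h0 h1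
      have e2 := hB 1 zero_le_one le_rfl
      have e3 : |a * χ 1| ≤ B := by
        rw [abs_mul, abs_of_nonneg h0]
        nlinarith [abs_nonneg (χ 1)]
      have := abs_sub (χ a) (a * χ 1)
      simp only [pow_zero, mul_one]; linarith
    | succ k ih =>
      intro a h0 h1
      rcases le_total a (1 / 2) with h | h
      · have h2 := ih (a + a) (by linarith) (by linarith)
        rw [hadd a a h0 h0 (by linarith)] at h2
        have e : χ a + χ a - (a + a) * χ 1 = 2 * (χ a - a * χ 1) := by ring
        rw [e, abs_mul, abs_two] at h2
        rw [pow_succ]; linarith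
      · have h2 := ih (a - (1 - a)) (by linarith) (by linarith)
        have e1 := hadd a (1 - a) h0 (by linarith) (by linarith)
        have e2 := hadd (1 - a) (a - (1 - a)) (by linarith) (by linarith) (by linarith)
        rw [show a + (1 - a) = 1 by ring] at e1
        rw [show 1 - a + (a - (1 - a)) = a by ring] at e2
        have e : χ (a - (1 - a)) - (a - (1 - a)) * χ 1 = 2 * (χ a - a * χ 1) := by
          linear_combination e1 - e2
        rw [e, abs_mul, abs_two] at h2
        rw [pow_succ]; linarith
  by_contra hne
  have hpos : 0 < |χ a - a * χ 1| := abs_pos.2 (sub_ne_zero.2 hne)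
  obtain ⟨k, hk⟩ := pow_unbounded_of_one_lt (2 * B / |χ a - a * χ 1|) (one_lt_two (α := ℝ))
  rw [div_lt_iff₀ hpos] at hk
  have := key k a ha0 ha1
  linarith

/-- A frame function that is constant on the equator and minimal at the pole is a quadratic form.
Moving in small steps orthogonally to the radius, `(1 + iα/n)ⁿ → exp (iα)`, shows that it is
invariant under rotations about the pole. As a function of the squared height it is then affine,
by Cauchy's functional equation. -/
lemma quadratic_of_equator {g : E → ℝ} {W c : ℝ} (hg : IsFrame g W)
    (hc : ∀ x y, x ^ 2 + y ^ 2 ≠ 0 → g (vec x y 0) = c)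
    (hmin : ∀ v, v ≠ 0 → g (vec 0 0 1) ≤ g v) {x y z : ℝ} (h : x ^ 2 + y ^ 2 + z ^ 2 ≠ 0) :
    (x ^ 2 + y ^ 2 + z ^ 2) * g (vec x y z) = g (vec 0 0 1) * z ^ 2 + c * (x ^ 2 + y ^ 2) := by
  have hmax : ∀ v, v ≠ 0 → g v ≤ c + 0 := le_of_pole hg hc hmin (by simp)
  set φ : ℂ → ℝ := fun w => g (vec w.re w.im 1) with hφ
  have hφc : ∀ w, ContinuousAt φ w := by
    intro w
    have h1 : ContinuousAt g (vec w.re w.im 1) :=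
      hg.continuousAt hmin (vec_ne_zero (by positivity))
    have h2 : Continuous (fun w : ℂ => vec w.re w.im 1) := by
      refine (PiLp.continuous_toLp 2 _).comp (continuous_pi fun i => ?_)
      fin_cases i
      · exact Complex.continuous_re
      · exact Complex.continuous_im
      · exact continuous_const
    exact ContinuousAt.comp (f := fun w : ℂ => vec w.re w.im 1) (g := g) h1 h2.continuousAt
  have hstep : ∀ w : ℂ, ∀ t : ℝ, φ w ≤ φ (w * (1 + Complex.I * t)) := by
    intro w t
    by_cases hw : w = 0
    · simp [hw]
    have hw' : w.re ^ 2 + w.im ^ 2 ≠ 0 := by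
      have := Complex.normSq_pos.2 hw
      rw [Complex.normSq_apply] at this
      nlinarith
    have := descent hg hc hmax hw' t
    simp only [hφ]
    have e1 : (w * (1 + Complex.I * t)).re = w.re - t * w.im := by simp; ring
    have e2 : (w * (1 + Complex.I * t)).im = w.im + t * w.re := by simp; ring
    rw [e1, e2]; linarith
  have hpow : ∀ n : ℕ, ∀ w : ℂ, ∀ t : ℝ, φ w ≤ φ (w * (1 + Complex.I * t) ^ n) := by
    intro n w t
    induction n with
    | zero => simp
    | succ n ih =>
      refine ih.trans ?_
      have := hstep (w * (1 + Complex.I * t) ^ n) t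
      rwa [mul_assoc, ← pow_succ] at this
  have hrot : ∀ w : ℂ, ∀ α : ℝ, φ w ≤ φ (w * Complex.exp (Complex.I * α)) := by
    intro w α
    have h1 := (Complex.tendsto_one_add_div_pow_exp (Complex.I * α)).const_mul w
    have h2 := (hφc _).tendsto.comp h1
    refine ge_of_tendsto' h2 fun n => ?_
    have := hpow n w (α / n)
    simp only [Function.comp]
    rwa [show ((α / n : ℝ) : ℂ) = (α : ℂ) / n by push_cast; rfl, ← mul_div_assoc] at this
  have hrad : ∀ w : ℂ, φ w = φ (‖w‖ : ℂ) := by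
    intro w
    apply le_antisymm
    · have := hrot w (-w.arg)
      have e : w * Complex.exp (Complex.I * ((-w.arg : ℝ) : ℂ)) = ‖w‖ := by
        nth_rewrite 1 [← Complex.norm_mul_exp_arg_mul_I w]
        rw [mul_assoc, ← Complex.exp_add]
        have : (w.arg : ℂ) * Complex.I + Complex.I * ((-w.arg : ℝ) : ℂ) = 0 := by
          push_cast; ring
        rw [this, Complex.exp_zero, mul_one]
      rwa [e] at this
    · have := hrot (‖w‖ : ℂ) w.arg
      rwa [mul_comm Complex.I, Complex.norm_mul_exp_arg_mul_I] at this
  -- by rotational symmetry `g` depends only on the squared height `l` on the unit sphere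
  set χ : ℝ → ℝ := fun l => c - g (vec (Real.sqrt (1 - l)) 0 (Real.sqrt l)) with hχ
  have hgχ : ∀ x y z : ℝ, x ^ 2 + y ^ 2 + z ^ 2 ≠ 0 →
      g (vec x y z) = c - χ (z ^ 2 / (x ^ 2 + y ^ 2 + z ^ 2)) := by
    intro x y z h
    have hpos : 0 < x ^ 2 + y ^ 2 + z ^ 2 := lt_of_le_of_ne (by positivity) (Ne.symm h)
    have e0 : 1 - z ^ 2 / (x ^ 2 + y ^ 2 + z ^ 2) = (x ^ 2 + y ^ 2) / (x ^ 2 + y ^ 2 + z ^ 2) := by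
      field_simp; ring
    simp only [hχ, sub_sub_cancel]
    rw [e0]
    by_cases hz : z = 0
    · subst hz
      have h' : x ^ 2 + y ^ 2 ≠ 0 := by simpa using h
      rw [hc x y h']
      have e1 : (x ^ 2 + y ^ 2) / (x ^ 2 + y ^ 2 + 0 ^ 2) = 1 := by
        rw [show x ^ 2 + y ^ 2 + 0 ^ 2 = x ^ 2 + y ^ 2 by ring]; exact div_self h'
      rw [e1]
      simp [hc 1 0 (by norm_num)]
    · have h1 := hg.vec_eq (x := x / z) (y := y / z) (z := 1) (x' := x) (y' := y) (z' := z) hz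
        (by positivity) (by field_simp) (by field_simp) (by ring)
      have h2 := hrad ⟨x / z, y / z⟩
      simp only [hφ, Complex.ofReal_re, Complex.ofReal_im] at h2
      have hn : ‖(⟨x / z, y / z⟩ : ℂ)‖ = Real.sqrt (x ^ 2 + y ^ 2) / |z| := by
        rw [Complex.norm_def, Complex.normSq_apply, ← Real.sqrt_sq_eq_abs,
          ← Real.sqrt_div (by positivity)]
        congr 1; simp only; field_simp
      rw [hn] at h2
      rw [h1, h2]
      have hz' : 0 < |z| := abs_pos.2 hz
      have hsp := Real.sqrt_pos.2 hpos
      symm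
      refine hg.vec_eq (t := |z| / Real.sqrt (x ^ 2 + y ^ 2 + z ^ 2)) (by positivity)
        (by positivity) ?_ ?_ ?_
      · rw [Real.sqrt_div (by positivity)]; field_simp
      · ring
      · rw [Real.sqrt_div (by positivity), Real.sqrt_sq_eq_abs, mul_one]
  have hχ0 : χ 0 = 0 := by simp [hχ, hc 1 0 (by norm_num)]
  have hχ1 : χ 1 = c - g (vec 0 0 1) := by simp [hχ]
  have hadd : ∀ a b, 0 ≤ a → 0 ≤ b → a + b ≤ 1 → χ (a + b) = χ a + χ b := by
    intro a b ha hb hab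
    rcases eq_or_lt_of_le (add_nonneg ha hb) with h0 | hpos
    · have : a = 0 := by linarith
      have : b = 0 := by linarith
      subst_vars; simp [hχ0]
    set p := Real.sqrt (1 - (a + b)) with hp
    set q := Real.sqrt (a + b) with hq
    have hp2 : p ^ 2 = 1 - (a + b) := Real.sq_sqrt (by linarith)
    have hq2 : q ^ 2 = a + b := Real.sq_sqrt hpos.le
    have ha2 : Real.sqrt a ^ 2 = a := Real.sq_sqrt ha
    have hb2 : Real.sqrt b ^ 2 = b := Real.sq_sqrt hb
    set u := Real.sqrt a
    set v := Real.sqrt b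
    have n1 : p ^ 2 + 0 ^ 2 + q ^ 2 = 1 := by rw [hp2, hq2]; ring
    have n2 : (u * p) ^ 2 + v ^ 2 + (u * q) ^ 2 = a + b := by
      rw [mul_pow, mul_pow, hp2, hq2, ha2, hb2]; ring
    have n3 : (v * p) ^ 2 + (-u) ^ 2 + (v * q) ^ 2 = a + b := by
      rw [mul_pow, mul_pow, neg_sq, hp2, hq2, ha2, hb2]; ring
    have n4 : q ^ 2 + 0 ^ 2 + (-p) ^ 2 = 1 := by rw [neg_sq, hp2, hq2]; ring
    have h1 := hg.vec (x := p) (y := 0) (z := q) (x' := 0) (y' := 1) (z' := 0)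
      (x'' := q) (y'' := 0) (z'' := -p) (by rw [n1]; norm_num) (by norm_num)
      (by rw [n4]; norm_num) (by ring) (by ring) (by ring)
    have h2 := hg.vec (x := u * p) (y := v) (z := u * q) (x' := v * p) (y' := -u) (z' := v * q)
      (x'' := q) (y'' := 0) (z'' := -p) (by rw [n2]; exact hpos.ne') (by rw [n3]; exact hpos.ne')
      (by rw [n4]; norm_num) (by linear_combination u * v * (hp2 + hq2)) (by ring) (by ring)
    rw [hc 0 1 (by norm_num)] at h1
    have k1 := hgχ p 0 q (by rw [n1]; norm_num)
    have k2 := hgχ (u * p) v (u * q) (by rw [n2]; exact hpos.ne')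
    have k3 := hgχ (v * p) (-u) (v * q) (by rw [n3]; exact hpos.ne')
    rw [n1, hq2, div_one] at k1
    rw [n2, mul_pow, hq2, ha2, mul_div_cancel_right₀ _ hpos.ne'] at k2
    rw [n3, mul_pow, hq2, hb2, mul_div_cancel_right₀ _ hpos.ne'] at k3
    linarith
  have hB : ∀ a, 0 ≤ a → a ≤ 1 → |χ a| ≤ c - g (vec 0 0 1) := by
    intro a h0 h1
    have hne : vec (Real.sqrt (1 - a)) 0 (Real.sqrt a) ≠ 0 := vec_ne_zero (by
      rw [Real.sq_sqrt h0, Real.sq_sqrt (by linarith)]; norm_num)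
    have e1 := hmin _ hne
    have e2 := hmax _ hne
    simp only [hχ]
    rw [abs_le]
    constructor <;> linarith
  have hpos : 0 < x ^ 2 + y ^ 2 + z ^ 2 := lt_of_le_of_ne (by positivity) (Ne.symm h)
  rw [hgχ x y z h, linear_of_additive hadd hB (by positivity)
    ((div_le_one hpos).2 (by nlinarith [sq_nonneg x, sq_nonneg y])), hχ1]
  field_simp; ring

/-- If `f` is minimal at the pole, then the sum of `f` and its quarter turn is quadratic. -/
lemma quarter_turn_min {f : E → ℝ} {W : ℝ} (hf : IsFrame f W)
    (hmin : ∀ v, v ≠ 0 → f (vec 0 0 1) ≤ f v) {x y z : ℝ} (h : x ^ 2 + y ^ 2 + z ^ 2 ≠ 0) :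
    (x ^ 2 + y ^ 2 + z ^ 2) * (f (vec x y z) + f (vec (-y) x z))
      = 2 * f (vec 0 0 1) * z ^ 2 + (W - f (vec 0 0 1)) * (x ^ 2 + y ^ 2) := by
  obtain ⟨R, hR⟩ := exists_quarter_turn
  have hg := hf.add (hf.comp R)
  have := quadratic_of_equator hg (c := W - f (vec 0 0 1)) (x := x) (y := y) (z := z) ?_ ?_ h
  · simp only [hR, neg_zero] at this
    rw [this]; ring
  · intro x y h
    have := hf.vec (x := x) (y := y) (z := 0) (x' := -y) (y' := x) (z' := 0)
      (x'' := 0) (y'' := 0) (z'' := 1) (by simpa using h) (by intro h'; apply h; linarith)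
      (by norm_num) (by ring) (by ring) (by ring)
    simp only [hR]; linarith
  · intro v hv
    have h1 := hmin v hv
    have h2 := hmin (R v) (by simpa using hv)
    simp only [hR, neg_zero]
    linarith

lemma quarter_turn_max {f : E → ℝ} {W : ℝ} (hf : IsFrame f W)
    (hmax : ∀ v, v ≠ 0 → f v ≤ f (vec 0 0 1)) {x y z : ℝ} (h : x ^ 2 + y ^ 2 + z ^ 2 ≠ 0) :
    (x ^ 2 + y ^ 2 + z ^ 2) * (f (vec x y z) + f (vec (-y) x z))
      = 2 * f (vec 0 0 1) * z ^ 2 + (W - f (vec 0 0 1)) * (x ^ 2 + y ^ 2) := by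
  have := quarter_turn_min hf.neg (fun v hv => neg_le_neg (hmax v hv)) h
  linear_combination -this

/-! ### Bounded frame functions on `ℝ³` are quadratic forms -/

lemma orthonormalize {a b c : E} (ha : a ≠ 0) (hb : b ≠ 0) (hc : c ≠ 0)
    (hab : inner ℝ a b = 0) (hac : inner ℝ a c = 0) (hbc : inner ℝ b c = 0) :
    Orthonormal ℝ (![‖a‖⁻¹ • a, ‖b‖⁻¹ • b, ‖c‖⁻¹ • c] : Fin 3 → E) := by
  have hba : inner ℝ b a = 0 := by rwa [real_inner_comm]
  have hca : inner ℝ c a = 0 := by rwa [real_inner_comm]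
  have hcb : inner ℝ c b = 0 := by rwa [real_inner_comm]
  have ha' : ‖a‖ ≠ 0 := norm_ne_zero_iff.2 ha
  have hb' : ‖b‖ ≠ 0 := norm_ne_zero_iff.2 hb
  have hc' : ‖c‖ ≠ 0 := norm_ne_zero_iff.2 hc
  rw [orthonormal_iff_ite]
  intro i j
  fin_cases i <;> fin_cases j <;>
    simp [inner_smul_left, inner_smul_right, hab, hac, hbc, hba, hca, hcb, ha', hb', hc',
      norm_smul]

/-- Parseval's identity for an orthogonal, not necessarily normalized, triple. -/
lemma parseval {a b c : E} (ha : a ≠ 0) (hb : b ≠ 0) (hc : c ≠ 0)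
    (hab : inner ℝ a b = 0) (hac : inner ℝ a c = 0) (hbc : inner ℝ b c = 0) (x y : E) :
    inner ℝ x a * inner ℝ a y / ‖a‖ ^ 2 + inner ℝ x b * inner ℝ b y / ‖b‖ ^ 2
      + inner ℝ x c * inner ℝ c y / ‖c‖ ^ 2 = (inner ℝ x y : ℝ) := by
  have ho := orthonormalize ha hb hc hab hac hbc
  obtain ⟨B, hB⟩ := Orthonormal.exists_orthonormalBasis_extension_of_card_eq (𝕜 := ℝ)
    (E := E) (ι := Fin 3) (by simp) (s := Set.univ)
    (v := ![‖a‖⁻¹ • a, ‖b‖⁻¹ • b, ‖c‖⁻¹ • c]) (ho.comp _ Subtype.val_injective)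
  have h := B.sum_inner_mul_inner x y
  rw [Fin.sum_univ_three, hB 0 trivial, hB 1 trivial, hB 2 trivial] at h
  rw [← h]
  simp only [Matrix.cons_val, inner_smul_left, inner_smul_right]
  simp only [conj_trivial]
  ring

lemma parseval_coord {a b c : E} (ha : a ≠ 0) (hb : b ≠ 0) (hc : c ≠ 0)
    (hab : inner ℝ a b = 0) (hac : inner ℝ a c = 0) (hbc : inner ℝ b c = 0) (i j : Fin 3) :
    a i * a j / ‖a‖ ^ 2 + b i * b j / ‖b‖ ^ 2 + c i * c j / ‖c‖ ^ 2 = if i = j then 1 else 0 := by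
  have h := parseval ha hb hc hab hac hbc (EuclideanSpace.single i 1) (EuclideanSpace.single j 1)
  simpa [EuclideanSpace.inner_single_left, EuclideanSpace.inner_single_right, eq_comm (a := i)] using h

lemma isFrame_diag (M α m : ℝ) :
    IsFrame (fun v => (M * v 0 ^ 2 + α * v 1 ^ 2 + m * v 2 ^ 2) / ‖v‖ ^ 2) (M + α + m) := by
  intro a b c ha hb hc hab hac hbc
  have h := parseval_coord ha hb hc hab hac hbc
  have h0 := h 0 0
  have h1 := h 1 1
  have h2 := h 2 2
  rw [if_pos rfl] at h0 h1 h2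
  linear_combination M * h0 + α * h1 + m * h2

/-- Cyclic permutation of the coordinates. -/
lemma exists_cyclic :
    ∃ S : E ≃ₗᵢ[ℝ] E, ∀ x y z, S (vec x y z) = vec z x y := by
  let L : E →ₗ[ℝ] E :=
    { toFun := fun v => vec (v 2) (v 0) (v 1)
      map_add' := by intro u v; rw [add_vec]; congr 1
      map_smul' := by intro t v; simp only [RingHom.id_apply]; rw [smul_vec]; simp }
  let LI : E →ₗᵢ[ℝ] E :=
    { L with
      norm_map' := by
        intro v
        have h : ‖vec (v 2) (v 0) (v 1)‖ ^ 2 = ‖v‖ ^ 2 := by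
          conv_rhs => rw [vec_eta v]
          rw [norm_vec_sq, norm_vec_sq]; ring
        exact (sq_eq_sq₀ (norm_nonneg _) (norm_nonneg _)).1 h }
  exact ⟨LI.toLinearIsometryEquiv rfl, fun x y z => rfl⟩

lemma exists_max {f : E → ℝ} {W k : ℝ} (hf : IsFrame f W) (hk : ∀ v, v ≠ 0 → k ≤ f v) :
    ∃ p : E, ‖p‖ = 1 ∧ ∀ v, v ≠ 0 → f v ≤ f p := by
  have hcont : ContinuousOn f (Metric.sphere (0 : E) 1) := fun v hv =>
    (hf.continuousAt hk (by rintro rfl; simp at hv)).continuousWithinAt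
  obtain ⟨p, hp, hmax⟩ := (isCompact_sphere (0 : E) 1).exists_isMaxOn
    ⟨vec 0 0 1, by
      have := norm_vec_sq 0 0 1
      simp only [mem_sphere_iff_norm, sub_zero]
      nlinarith [norm_nonneg (vec 0 0 1)]⟩ hcont
  refine ⟨p, by simpa using hp, fun v hv => ?_⟩
  have h1 : ‖v‖⁻¹ • v ∈ Metric.sphere (0 : E) 1 := by simp [norm_smul, hv]
  have h2 := hmax h1
  rwa [Set.mem_ofPred_eq, hf.smul (by simpa using hv) v hv] at h2

/-- A frame function of weight zero that is odd under the quarter turns about two coordinate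
axes vanishes. If `K > 0` is the maximum, attained at `p = (x, y, z)`, then `-K` is the minimum, and
`quarter_turn_max` shows that any unit vector `s` where `K` is attained has `⟪p, s⟫² ≥ 1 / 3`. The
symmetries provide the maxima `s = (±y, ±z, ±x)`, and adding up the inequalities forces
`x² = y² = z²`, where the symmetries give the value `0`. -/
lemma zero_of_odd {d : E → ℝ} {k : ℝ} (hd : IsFrame d 0) (hk : ∀ v, v ≠ 0 → k ≤ d v)
    (h1 : ∀ x y z, x ^ 2 + y ^ 2 + z ^ 2 ≠ 0 → d (vec x y z) + d (vec x (-z) y) = 0)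
    (h3 : ∀ x y z, x ^ 2 + y ^ 2 + z ^ 2 ≠ 0 → d (vec x y z) + d (vec (-y) x z) = 0)
    (v : E) (hv : v ≠ 0) : d v = 0 := by
  obtain ⟨p, hp, hmax⟩ := exists_max hd hk
  have hflip1 : ∀ x y z, x ^ 2 + y ^ 2 + z ^ 2 ≠ 0 → d (vec x (-y) (-z)) = d (vec x y z) := by
    intro x y z h
    have e1 := h1 x y z h
    have e2 := h1 x (-z) y (by intro h'; apply h; linarith)
    linarith
  have hflip3 : ∀ x y z, x ^ 2 + y ^ 2 + z ^ 2 ≠ 0 → d (vec (-x) (-y) z) = d (vec x y z) := by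
    intro x y z h
    have e1 := h3 x y z h
    have e2 := h3 (-y) x z (by intro h'; apply h; linarith)
    linarith
  have hneg : ∀ x y z, x ^ 2 + y ^ 2 + z ^ 2 ≠ 0 → d (vec (-x) (-y) (-z)) = d (vec x y z) :=
    fun x y z h => hd.vec_eq (t := -1) (by norm_num) h (by ring) (by ring) (by ring)
  have hcyc : ∀ x y z, x ^ 2 + y ^ 2 + z ^ 2 ≠ 0 → d (vec y z x) = d (vec x y z) := by
    intro x y z h
    have e1 := h3 x y z h
    have e2 := h1 (-y) x z (by intro h'; apply h; linarith)
    have e3 := hflip3 y z x (by intro h'; apply h; linarith)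
    linarith
  have hodd : ∀ v, v ≠ 0 → ∃ v', v' ≠ 0 ∧ d v = - d v' := by
    intro v hv
    have hn : (v 0) ^ 2 + (v 1) ^ 2 + (v 2) ^ 2 ≠ 0 := by
      rw [← norm_vec_sq, ← vec_eta]; simpa using hv
    have e := h1 _ _ _ hn
    rw [← vec_eta] at e
    exact ⟨vec (v 0) (-(v 2)) (v 1), vec_ne_zero (by intro h'; apply hn; linarith), by linarith⟩
  have hlow : ∀ v, v ≠ 0 → - d p ≤ d v := by
    intro v hv
    obtain ⟨v', hv', e⟩ := hodd v hv
    have := hmax v' hv'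
    linarith
  have hK : d p ≤ 0 := by
    by_contra hK
    push Not at hK
    obtain ⟨T, hT⟩ := exists_pole p hp
    have hclose : ∀ s : E, ‖s‖ = 1 → d s = d p → 1 / 3 ≤ (inner ℝ p s : ℝ) ^ 2 := by
      intro s hs hds
      set u := T.symm s with hu
      have hTu : T u = s := by simp [hu]
      have hun : (u 0) ^ 2 + (u 1) ^ 2 + (u 2) ^ 2 = 1 := by
        rw [← norm_vec_sq, ← vec_eta, hu, T.symm.norm_map, hs]; norm_num
      have hin : (inner ℝ p s : ℝ) = u 2 := by
        rw [← hTu, ← hT, T.inner_map_map, vec_eta u, inner_vec]; simp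
      have hq := quarter_turn_max (hd.comp T)
        (fun v hv => by rw [hT]; exact hmax _ (by simpa using hv))
        (x := u 0) (y := u 1) (z := u 2) (by rw [hun]; norm_num)
      rw [hun, ← vec_eta u, hTu, hT, hds] at hq
      have hl := hlow (T (vec (-(u 1)) (u 0) (u 2)))
        (by rw [Ne, map_eq_zero_iff _ T.injective]; apply vec_ne_zero; intro h'; linarith)
      rw [hin]
      have : d p * (1 / 3) ≤ d p * (u 2) ^ 2 := by nlinarith
      exact le_of_mul_le_mul_left this hK
    obtain ⟨x, y, z, rfl⟩ : ∃ x y z, p = vec x y z := ⟨_, _, _, vec_eta p⟩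
    have hn : x ^ 2 + y ^ 2 + z ^ 2 = 1 := by rw [← norm_vec_sq, hp]; norm_num
    have hn' : x ^ 2 + y ^ 2 + z ^ 2 ≠ 0 := by rw [hn]; norm_num
    have hnorm : ∀ a b c : ℝ, a ^ 2 + b ^ 2 + c ^ 2 = 1 → ‖vec a b c‖ = 1 := by
      intro a b c h
      have := norm_vec_sq a b c
      rw [h] at this
      nlinarith [norm_nonneg (vec a b c)]
    have hny : y ^ 2 + z ^ 2 + x ^ 2 ≠ 0 := by intro h'; apply hn'; linarith
    have c1 := hclose (vec y z x) (hnorm _ _ _ (by linarith)) (hcyc _ _ _ hn')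
    have c2 := hclose (vec y (-z) (-x)) (hnorm _ _ _ (by linarith))
      ((hflip1 _ _ _ hny).trans (hcyc _ _ _ hn'))
    have c3 := hclose (vec (-y) (-z) x) (hnorm _ _ _ (by linarith))
      ((hflip3 _ _ _ hny).trans (hcyc _ _ _ hn'))
    have c4 := hclose (vec (-y) z (-x)) (hnorm _ _ _ (by linarith)) (by
      have := hflip1 (-y) (-z) x (by intro h'; apply hn'; linarith)
      rw [neg_neg] at this
      exact this.trans ((hflip3 _ _ _ hny).trans (hcyc _ _ _ hn')))
    rw [inner_vec] at c1 c2 c3 c4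
    have hσ : 1 / 3 ≤ x ^ 2 * y ^ 2 + y ^ 2 * z ^ 2 + z ^ 2 * x ^ 2 := by nlinarith
    have hyz : y ^ 2 = z ^ 2 := by
      have hs : (x ^ 2 + y ^ 2 + z ^ 2) ^ 2 = 1 := by rw [hn]; norm_num
      have : (y ^ 2 - z ^ 2) ^ 2 ≤ 0 := by
        nlinarith [sq_nonneg (x ^ 2 - y ^ 2), sq_nonneg (z ^ 2 - x ^ 2)]
      nlinarith [pow_eq_zero_iff (two_ne_zero) |>.1 (le_antisymm this (sq_nonneg _))]
    have hdiag : ∀ x z, x ^ 2 + z ^ 2 + z ^ 2 ≠ 0 → d (vec x z z) = 0 := by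
      intro x z h
      have e1 := h1 x z z h
      have e2 := hneg x (-z) z (by intro h'; apply h; linarith)
      have e3 := hflip3 x z (-z) (by intro h'; apply h; linarith)
      have e4 := hflip1 x (-z) z (by intro h'; apply h; linarith)
      have e5 := hflip1 (-x) z (-z) (by intro h'; apply h; linarith)
      have e6 := hflip3 x z z h
      rw [neg_neg] at *
      linarith
    rcases sq_eq_sq_iff_eq_or_eq_neg.1 hyz with rfl | rfl
    · linarith [hdiag x y hn']
    · have e1 := h1 x (-z) z hn'
      have e2 := hflip1 x z z (by intro h'; apply hn'; linarith)
      have e3 := hdiag x z (by intro h'; apply hn'; linarith)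
      linarith
  obtain ⟨v', hv', e⟩ := hodd v hv
  have := hmax v hv
  have := hmax v' hv'
  linarith

/-- Gleason's theorem for `ℝ³`: a frame function bounded below is a quadratic form on the sphere. -/
theorem real_gleason {f : E → ℝ} {W k : ℝ} (hf : IsFrame f W) (hk : ∀ v, v ≠ 0 → k ≤ f v) :
    ∃ A : E →ₗ[ℝ] E, ∀ v, v ≠ 0 → ‖v‖ ^ 2 * f v = inner ℝ v (A v) := by
  obtain ⟨p, hp, hmax⟩ := exists_max hf hk
  -- `r` minimizes `f` on the great circle orthogonal to the maximum `p`
  obtain ⟨r, ⟨hr, hpr⟩, hrmin⟩ : ∃ r ∈ {v : E | ‖v‖ = 1 ∧ inner ℝ p v = (0 : ℝ)},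
      IsMinOn f {v : E | ‖v‖ = 1 ∧ inner ℝ p v = (0 : ℝ)} r := by
    have hsub : {v : E | ‖v‖ = 1 ∧ inner ℝ p v = (0 : ℝ)}
        = Metric.sphere (0 : E) 1 ∩ {v : E | inner ℝ p v = (0 : ℝ)} := by ext; simp
    refine IsCompact.exists_isMinOn ?_ ?_ ?_
    · rw [hsub]
      exact (isCompact_sphere _ _).inter_right (isClosed_eq (by fun_prop) continuous_const)
    · obtain ⟨r, hr, hpr, -⟩ := exists_normal p p
      exact ⟨r, hr, hpr⟩
    · rintro v ⟨hv, -⟩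
      exact (hf.continuousAt hk (by rintro rfl; simp at hv)).continuousWithinAt
  obtain ⟨T, hT3, hT1⟩ := exists_isometry r p hr hp (by rwa [real_inner_comm])
  set h : E → ℝ := fun v => f (T v) with hh
  have hF : IsFrame h W := hf.comp T
  have hmax1 : ∀ v, v ≠ 0 → h v ≤ h (vec 1 0 0) := by
    intro v hv
    simp only [hh, hT1]; exact hmax _ (by simpa using hv)
  have heq : ∀ y z, y ^ 2 + z ^ 2 ≠ 0 → h (vec 0 0 1) ≤ h (vec 0 y z) := by
    intro y z hyz
    have hv : vec 0 y z ≠ 0 := vec_ne_zero (by simpa using hyz)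
    have := hrmin (a := T (‖vec 0 y z‖⁻¹ • vec 0 y z)) ⟨by
      rw [T.norm_map, norm_smul, norm_inv, norm_norm, inv_mul_cancel₀ (norm_ne_zero_iff.2 hv)], by
      rw [← hT1, T.inner_map_map, inner_smul_right, inner_vec]; ring⟩
    rw [Set.mem_ofPred_eq, ← hT3] at this
    have e := hF.smul (inv_ne_zero (norm_ne_zero_iff.2 hv)) _ hv
    simp only [hh] at e ⊢
    rwa [e] at this
  -- a point and its orthogonal companion on the meridian towards `p` have a constant sum, so a
  -- minimum on the equator is a global one
  have hmin3 : ∀ v, v ≠ 0 → h (vec 0 0 1) ≤ h v := by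
    intro v hv
    obtain ⟨x, y, z, rfl⟩ : ∃ x y z, v = vec x y z := ⟨_, _, _, vec_eta v⟩
    by_cases hyz : y ^ 2 + z ^ 2 = 0
    · have hy : y = 0 := by nlinarith [sq_nonneg y, sq_nonneg z]
      have hz : z = 0 := by nlinarith [sq_nonneg y, sq_nonneg z]
      subst hy hz
      have hx : x ≠ 0 := by
        rintro rfl; apply hv; ext i; fin_cases i <;> rfl
      rw [hF.vec_eq (x := 1) (y := 0) (z := 0) (x' := x) (y' := 0) (z' := 0) hx (by norm_num)
        (by ring) (by ring) (by ring)]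
      exact hmax1 (vec 0 0 1) (vec_ne_zero (by norm_num))
    · have hpos : 0 < y ^ 2 + z ^ 2 := lt_of_le_of_ne (by positivity) (Ne.symm hyz)
      have e1 := hF.vec (x := x) (y := y) (z := z) (x' := -(y ^ 2 + z ^ 2)) (y' := x * y)
        (z' := x * z) (x'' := 0) (y'' := -z) (z'' := y) (by nlinarith [sq_nonneg x])
        (by rw [neg_sq]; positivity) (by nlinarith) (by ring) (by ring) (by ring)
      have e2 := hF.vec (x := 1) (y := 0) (z := 0) (x' := 0) (y' := y)
        (z' := z) (x'' := 0) (y'' := -z) (z'' := y) (by norm_num)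
        (by nlinarith) (by nlinarith) (by ring) (by ring) (by ring)
      have e3 := hmax1 (vec (-(y ^ 2 + z ^ 2)) (x * y) (x * z))
        (vec_ne_zero (by rw [neg_sq]; positivity))
      have e4 := heq y z hyz
      linarith
  set M := h (vec 1 0 0) with hM
  set m := h (vec 0 0 1) with hm
  set α := h (vec 0 1 0) with hα
  have hW : M + α + m = W := hF.vec (by norm_num) (by norm_num) (by norm_num) (by norm_num)
    (by norm_num) (by norm_num)
  set d : E → ℝ := fun v => h v + -((M * v 0 ^ 2 + α * v 1 ^ 2 + m * v 2 ^ 2) / ‖v‖ ^ 2) with hd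
  have hdF : IsFrame d 0 := by
    have := hF.add (isFrame_diag M α m).neg
    rwa [hW, add_neg_cancel] at this
  have hdvec : ∀ x y z, x ^ 2 + y ^ 2 + z ^ 2 ≠ 0 → (x ^ 2 + y ^ 2 + z ^ 2) * d (vec x y z)
      = (x ^ 2 + y ^ 2 + z ^ 2) * h (vec x y z) - (M * x ^ 2 + α * y ^ 2 + m * z ^ 2) := by
    intro x y z hn
    have e : d (vec x y z)
        = h (vec x y z) + -((M * x ^ 2 + α * y ^ 2 + m * z ^ 2) / (x ^ 2 + y ^ 2 + z ^ 2)) := by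
      rw [← norm_vec_sq]; rfl
    rw [e]; field_simp; ring
  have hd0 : ∀ v, v ≠ 0 → d v = 0 := by
    refine zero_of_odd (k := m - M) hdF ?_ ?_ ?_
    · intro v hv
      have e1 := hmin3 v hv
      have hn : ‖v‖ ^ 2 = v 0 ^ 2 + v 1 ^ 2 + v 2 ^ 2 := by rw [← norm_vec_sq, ← vec_eta]
      have hnpos : 0 < ‖v‖ ^ 2 := by positivity
      have e2 : (M * v 0 ^ 2 + α * v 1 ^ 2 + m * v 2 ^ 2) / ‖v‖ ^ 2 ≤ M := by
        rw [div_le_iff₀ hnpos, hn]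
        have a1 : α ≤ M := hmax1 _ (vec_ne_zero (by norm_num))
        have a2 : m ≤ M := hmax1 _ (vec_ne_zero (by norm_num))
        nlinarith [sq_nonneg (v 1), sq_nonneg (v 2)]
      simp only [hd]; linarith
    · intro x y z hn
      obtain ⟨S, hS⟩ := exists_cyclic
      have hq := quarter_turn_max (hF.comp S)
        (fun v hv => by rw [hS]; exact hmax1 _ (by simpa using hv))
        (x := y) (y := z) (z := x) (by intro h'; apply hn; linarith)
      simp only [hS, ← hM] at hq
      have e1 := hdvec x y z hn
      have e2 := hdvec x (-z) y (by intro h'; apply hn; linarith)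
      apply mul_left_cancel₀ hn
      linear_combination e1 + e2 + hq + (y ^ 2 + z ^ 2) * (- hW)
    · intro x y z hn
      have hq := quarter_turn_min hF hmin3 hn
      have e1 := hdvec x y z hn
      have e2 := hdvec (-y) x z (by intro h'; apply hn; linarith)
      apply mul_left_cancel₀ hn
      linear_combination e1 + e2 + hq + (x ^ 2 + y ^ 2) * (- hW)
  let D : E →ₗ[ℝ] E :=
    { toFun := fun v => vec (M * v 0) (α * v 1) (m * v 2)
      map_add' := by intro u v; rw [add_vec]; congr 1 <;> simp [mul_add]
      map_smul' := by
        intro t v; simp only [RingHom.id_apply]; rw [smul_vec]; congr 1 <;> simp <;> ring }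
  refine ⟨T.toLinearEquiv.toLinearMap ∘ₗ D ∘ₗ T.symm.toLinearEquiv.toLinearMap, fun v hv => ?_⟩
  obtain ⟨u, rfl⟩ := T.surjective v
  have hu : u ≠ 0 := by rintro rfl; simp at hv
  have hn : ‖u‖ ^ 2 = u 0 ^ 2 + u 1 ^ 2 + u 2 ^ 2 := by rw [← norm_vec_sq, ← vec_eta]
  have hnpos : 0 < ‖u‖ ^ 2 := by positivity
  have e := hdvec (u 0) (u 1) (u 2) (by rw [← hn]; exact hnpos.ne')
  rw [← vec_eta, hd0 u hu, ← hn] at e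
  have e2 : inner ℝ u (D u) = u 0 * (M * u 0) + u 1 * (α * u 1) + u 2 * (m * u 2) := by
    conv_lhs => rw [vec_eta u]
    exact inner_vec _ _ _ _ _ _
  have e3 : (T.toLinearEquiv.toLinearMap ∘ₗ D ∘ₗ T.symm.toLinearEquiv.toLinearMap) (T u)
      = T (D u) := by simp
  rw [e3, T.inner_map_map, T.norm_map, e2]
  simp only [hh] at e
  linarith

/-! ### From real planes to a sesquilinear form -/

section Sesquilinear

open ComplexConjugate

variable {V : Type*} [NormedAddCommGroup V] [InnerProductSpace ℂ V] {F : V → ℝ}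

/-- A function that is quadratic on every real plane spanned by a complex-orthonormal pair is
quadratic on the complex plane spanned by that pair. The dependence on the relative phase of the
two coordinates is found from the real plane spanned by `(a + b) / √2` and `i (a - b) / √2`, which
contains `(e^{it} a + e^{-it} b) / √2` for all `t`. -/
lemma quadratic_on_plane (hom : ∀ (z : ℂ) v, F (z • v) = ‖z‖ ^ 2 * F v)
    (pair : ∀ a b : V, ‖a‖ = 1 → ‖b‖ = 1 → inner ℂ a b = 0 → ∃ C : ℝ, ∀ c s : ℝ,
      F ((c : ℂ) • a + (s : ℂ) • b) = c ^ 2 * F a + s ^ 2 * F b + c * s * C)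
    {a b : V} (ha : ‖a‖ = 1) (hb : ‖b‖ = 1) (hab : inner ℂ a b = 0) :
    ∃ γ : ℂ, ∀ x y : ℂ,
      F (x • a + y • b) = ‖x‖ ^ 2 * F a + ‖y‖ ^ 2 * F b + 2 * (conj x * y * γ).re := by
  have hba : inner ℂ b a = 0 := inner_eq_zero_symm.1 hab
  have haa : inner ℂ a a = 1 := by rw [inner_self_eq_norm_sq_to_K, ha]; simp
  have hbb : inner ℂ b b = 1 := by rw [inner_self_eq_norm_sq_to_K, hb]; simp
  set r : ℝ := (√2)⁻¹ with hr
  have hr2 : r ^ 2 = 1 / 2 := by rw [hr, inv_pow, Real.sq_sqrt (by norm_num)]; norm_num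
  have hrC : (r : ℂ) ^ 2 = 1 / 2 := by rw [← Complex.ofReal_pow, hr2]; norm_num
  have hnr : ‖(r : ℂ)‖ ^ 2 = 1 / 2 := by rw [Complex.norm_real, Real.norm_eq_abs, sq_abs, hr2]
  set p : V := (r : ℂ) • (a + b) with hp
  set q : V := (r * Complex.I : ℂ) • (a - b) with hq
  have hpp : ‖p‖ = 1 := by
    have h : (inner ℂ p p : ℂ) = 1 := by
      simp only [hp, inner_smul_left, inner_smul_right, inner_add_left, inner_add_right, haa, hbb,
        hab, hba, Complex.conj_ofReal]
      linear_combination 2 * hrC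
    have h' : ‖p‖ ^ 2 = 1 := by rw [← inner_self_eq_norm_sq (𝕜 := ℂ), h]; simp
    nlinarith [norm_nonneg p]
  have hqq : ‖q‖ = 1 := by
    have h : (inner ℂ q q : ℂ) = 1 := by
      simp only [hq, inner_smul_left, inner_smul_right, inner_sub_left, inner_sub_right, haa, hbb,
        hab, hba, map_mul, Complex.conj_ofReal, Complex.conj_I]
      linear_combination 2 * hrC - 2 * (r : ℂ) ^ 2 * Complex.I_sq
    have h' : ‖q‖ ^ 2 = 1 := by rw [← inner_self_eq_norm_sq (𝕜 := ℂ), h]; simp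
    nlinarith [norm_nonneg q]
  have hpq : (inner ℂ p q : ℂ) = 0 := by
    simp only [hp, hq, inner_smul_left, inner_smul_right, inner_add_left, inner_sub_right, haa,
      hbb, hab, hba]
    ring
  obtain ⟨C, hC⟩ := pair p q hpp hqq hpq
  obtain ⟨C0, hC0⟩ := pair a b ha hb hab
  have hFp : F p = (F a + F b + C0) / 2 := by
    have := hC0 1 1
    simp only [Complex.ofReal_one, one_smul] at this
    rw [hp, hom, hnr, this]; ring
  have hFq : F q = (F a + F b - C0) / 2 := by
    have := hC0 1 (-1)
    simp only [Complex.ofReal_one, one_smul, Complex.ofReal_neg, neg_smul, ← sub_eq_add_neg] at this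
    rw [hq, hom, norm_mul, Complex.norm_I, mul_one, hnr, this]; ring
  have hunit : ∀ t : ℝ, ‖Complex.exp (t * Complex.I)‖ = 1 := Complex.norm_exp_ofReal_mul_I
  -- the value on `a + e^{iθ} b`
  have hphase : ∀ θ : ℝ, F (a + Complex.exp (θ * Complex.I) • b)
      = F a + F b + C0 * Real.cos θ - C * Real.sin θ := by
    intro θ
    have h := hC (Real.cos (θ / 2)) (-Real.sin (θ / 2))
    have e : ((Real.cos (θ / 2) : ℝ) : ℂ) • p + ((-Real.sin (θ / 2) : ℝ) : ℂ) • q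
        = ((r : ℂ) * Complex.exp (((-(θ / 2) : ℝ) : ℂ) * Complex.I)) •
          (a + Complex.exp (θ * Complex.I) • b) := by
      have e1 : Complex.exp (((-(θ / 2) : ℝ) : ℂ) * Complex.I)
          = Real.cos (θ / 2) - Real.sin (θ / 2) * Complex.I := by
        rw [Complex.exp_mul_I, ← Complex.ofReal_cos, ← Complex.ofReal_sin, Real.cos_neg,
          Real.sin_neg]
        push_cast; ring
      have e2 : Complex.exp (((-(θ / 2) : ℝ) : ℂ) * Complex.I) * Complex.exp (θ * Complex.I)
          = Real.cos (θ / 2) + Real.sin (θ / 2) * Complex.I := by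
        rw [← Complex.exp_add, show ((-(θ / 2) : ℝ) : ℂ) * Complex.I + θ * Complex.I
          = ((θ / 2 : ℝ) : ℂ) * Complex.I by push_cast; ring, Complex.exp_mul_I,
          ← Complex.ofReal_cos, ← Complex.ofReal_sin]
      rw [mul_smul, smul_add, smul_smul (Complex.exp _) (Complex.exp _), e2, e1, hp, hq]
      push_cast
      module
    rw [e, hom, norm_mul, hunit, mul_one, hnr, hFp, hFq] at h
    have hc : Real.cos θ = 2 * Real.cos (θ / 2) ^ 2 - 1 := by
      rw [← Real.cos_two_mul]; congr 1; ring
    have hs : Real.sin θ = 2 * Real.sin (θ / 2) * Real.cos (θ / 2) := by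
      rw [← Real.sin_two_mul]; congr 1; ring
    rw [hc, hs]
    linear_combination 2 * h + (F a + F b - C0) * Real.sin_sq_add_cos_sq (θ / 2)
  refine ⟨(C0 + C * Complex.I) / 2, fun x y => ?_⟩
  set θ : ℝ := y.arg - x.arg with hθ
  obtain ⟨D, hD⟩ := pair a (Complex.exp (θ * Complex.I) • b) ha
    (by rw [norm_smul, hunit, hb, one_mul]) (by rw [inner_smul_right, hab, mul_zero])
  have hFb : F (Complex.exp (θ * Complex.I) • b) = F b := by rw [hom, hunit]; ring
  have h1 := hD 1 1
  simp only [Complex.ofReal_one, one_smul] at h1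
  rw [hphase, hFb] at h1
  have hx := Complex.norm_mul_exp_arg_mul_I x
  have hy := Complex.norm_mul_exp_arg_mul_I y
  have e : x • a + y • b = Complex.exp (x.arg * Complex.I) •
      ((‖x‖ : ℂ) • a + (‖y‖ : ℂ) • Complex.exp (θ * Complex.I) • b) := by
    have hexp : Complex.exp (x.arg * Complex.I) * Complex.exp (θ * Complex.I)
        = Complex.exp (y.arg * Complex.I) := by
      rw [← Complex.exp_add]; congr 1; rw [hθ]; push_cast; ring
    conv_lhs => rw [← hx, ← hy, ← hexp]
    module
  have hxy : conj x * y = (‖x‖ * ‖y‖ : ℝ) * (Real.cos θ + Real.sin θ * Complex.I) := by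
    have hcx : conj x = ‖x‖ * Complex.exp (((-x.arg : ℝ) : ℂ) * Complex.I) := by
      conv_lhs => rw [← hx]
      rw [map_mul, Complex.conj_ofReal, ← Complex.exp_conj, map_mul, Complex.conj_ofReal,
        Complex.conj_I]
      push_cast; ring_nf
    have hexp : Complex.exp (((-x.arg : ℝ) : ℂ) * Complex.I) * Complex.exp (y.arg * Complex.I)
        = Real.cos θ + Real.sin θ * Complex.I := by
      rw [← Complex.exp_add, Complex.ofReal_cos, Complex.ofReal_sin, ← Complex.exp_mul_I]
      congr 1; rw [hθ]; push_cast; ring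
    rw [hcx, ← hexp]
    conv_lhs => rw [← hy]
    push_cast; ring
  have hre : (conj x * y * ((C0 + C * Complex.I) / 2)).re
      = ‖x‖ * ‖y‖ * (C0 * Real.cos θ - C * Real.sin θ) / 2 := by
    have : conj x * y * ((C0 + C * Complex.I) / 2)
        = ((‖x‖ * ‖y‖ * (C0 * Real.cos θ - C * Real.sin θ) / 2 : ℝ) : ℂ)
        + ((‖x‖ * ‖y‖ * (C0 * Real.sin θ + C * Real.cos θ) / 2 : ℝ) : ℂ) * Complex.I := by
      rw [hxy]; push_cast
      linear_combination (‖x‖ * ‖y‖ * (Complex.sin θ * C) / 2 : ℂ) * Complex.I_sq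
    rw [this, Complex.add_re, Complex.re_ofReal_mul, Complex.I_re, mul_zero, add_zero,
      Complex.ofReal_re]
  rw [e, hom, hunit, hD, hFb, hre]
  linear_combination -‖x‖ * ‖y‖ * h1

/-- The conclusion of `quadratic_on_plane` for an arbitrary pair of vectors, by orthonormalization. -/
lemma quadratic_on_span (hom : ∀ (z : ℂ) v, F (z • v) = ‖z‖ ^ 2 * F v)
    (pair : ∀ a b : V, ‖a‖ = 1 → ‖b‖ = 1 → inner ℂ a b = 0 → ∃ C : ℝ, ∀ c s : ℝ,
      F ((c : ℂ) • a + (s : ℂ) • b) = c ^ 2 * F a + s ^ 2 * F b + c * s * C)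
    (u v : V) :
    ∃ γ : ℂ, ∀ x y : ℂ,
      F (x • u + y • v) = ‖x‖ ^ 2 * F u + ‖y‖ ^ 2 * F v + 2 * (conj x * y * γ).re := by
  have hF0 : F 0 = 0 := by simpa using hom 0 0
  by_cases hu : u = 0
  · exact ⟨0, fun x y => by simp [hu, hF0, hom]⟩
  -- Gram-Schmidt: `u = p a`, `v = q a + w` with `w` orthogonal to `a`
  have hu' : ‖u‖ ≠ 0 := norm_ne_zero_iff.2 hu
  obtain ⟨a, p, ha, rfl⟩ : ∃ (a : V) (p : ℂ), ‖a‖ = 1 ∧ u = p • a :=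
    ⟨((‖u‖⁻¹ : ℝ) : ℂ) • u, ‖u‖, by simp [norm_smul, hu'], by
      rw [smul_smul, ← Complex.ofReal_mul, mul_inv_cancel₀ hu', Complex.ofReal_one, one_smul]⟩
  have haa : inner ℂ a a = 1 := by rw [inner_self_eq_norm_sq_to_K, ha]; simp
  obtain ⟨b, q, r, γ, hγ, rfl⟩ : ∃ (b : V) (q r γ : ℂ), (∀ x y : ℂ,
      F (x • a + (y * r) • b) = ‖x‖ ^ 2 * F a + ‖y * r‖ ^ 2 * F b
        + 2 * (conj x * (y * r) * γ).re) ∧ v = q • a + r • b := by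
    set q : ℂ := inner ℂ a v
    set w : V := v - q • a with hw
    by_cases hw0 : w = 0
    · exact ⟨0, q, 0, 0, fun x y => by simp [hom], by
        rw [smul_zero, add_zero]; exact sub_eq_zero.1 hw0⟩
    · have hw' : ‖w‖ ≠ 0 := norm_ne_zero_iff.2 hw0
      obtain ⟨γ, hγ⟩ := quadratic_on_plane hom pair (a := a) (b := ((‖w‖⁻¹ : ℝ) : ℂ) • w) ha
        (by simp [norm_smul, hw']) (by
          rw [inner_smul_right, hw, inner_sub_right, inner_smul_right, haa]; simp [q])
      refine ⟨_, q, ‖w‖, γ, fun x y => hγ _ _, ?_⟩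
      rw [smul_smul, ← Complex.ofReal_mul, mul_inv_cancel₀ hw', Complex.ofReal_one, one_smul, hw]
      abel
  refine ⟨conj p * (q * F a + r * γ), fun x y => ?_⟩
  have e1 : x • p • a + y • (q • a + r • b) = (x * p + y * q) • a + (y * r) • b := by module
  have e2 := hγ q 1
  rw [one_mul] at e2
  rw [e1, hγ, e2, hom]
  simp only [← Complex.normSq_eq_norm_sq, Complex.normSq_apply, Complex.mul_re, Complex.mul_im,
    Complex.add_re, Complex.add_im, Complex.conj_re, Complex.conj_im, Complex.ofReal_re,
    Complex.ofReal_im]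
  ring

/-- The Jordan–von Neumann argument: a function as in `quadratic_on_plane` is the diagonal of a Hermitian form. -/
lemma exists_form (hom : ∀ (z : ℂ) v, F (z • v) = ‖z‖ ^ 2 * F v)
    (pair : ∀ a b : V, ‖a‖ = 1 → ‖b‖ = 1 → inner ℂ a b = 0 → ∃ C : ℝ, ∀ c s : ℝ,
      F ((c : ℂ) • a + (s : ℂ) • b) = c ^ 2 * F a + s ^ 2 * F b + c * s * C) :
    ∃ h : V → V →ₗ[ℂ] ℂ, (∀ u v, h v u = conj (h u v)) ∧ ∀ v, h v v = F v := by
  choose γ hγ using quadratic_on_span hom pair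
  have hre : ∀ u v, F (u + v) = F u + F v + 2 * (γ u v).re := by
    intro u v
    have := hγ u v 1 1
    simpa using this
  have him : ∀ u v, F (u + Complex.I • v) = F u + F v - 2 * (γ u v).im := by
    intro u v
    have := hγ u v 1 Complex.I
    simpa [sub_eq_add_neg] using this
  have hext : ∀ u v w, ∀ z : ℂ, (γ u v).re = z.re → (γ u (Complex.I • v)).re = (w : ℂ).re →
      -w.re = z.im → γ u v = z := by
    intro u v w z h1 h2 h3
    refine Complex.ext h1 ?_
    have e1 := him u v
    have e2 := hre u (Complex.I • v)
    rw [hom, Complex.norm_I] at e2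
    linarith
  have hsm : ∀ u v (z : ℂ), (γ u (z • v)).re = (z * γ u v).re := by
    intro u v z
    have e1 := hγ u v 1 z
    have e2 := hre u (z • v)
    rw [hom] at e2
    rw [one_smul, e2] at e1
    simp only [norm_one, map_one, one_mul, one_pow] at e1
    linarith
  have hpar : ∀ u v, F (u + v) + F (u - v) = 2 * F u + 2 * F v := by
    intro u v
    have e1 := hre u v
    have e2 := hγ u v 1 (-1)
    simp only [one_smul, neg_smul, ← sub_eq_add_neg, norm_one, norm_neg, map_one, one_mul,
      neg_mul, Complex.neg_re] at e2
    linarith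
  have hadd : ∀ u v w, (γ u (v + w)).re = (γ u v).re + (γ u w).re := by
    intro u v w
    have p1 := hpar (u + v) w
    have p2 := hpar (u + w) v
    have p3 := hpar u (v - w)
    have p4 := hpar v w
    rw [show u + w + v = u + v + w by abel, show u + w - v = u - (v - w) by abel] at p2
    rw [show u + (v - w) = u + v - w by abel] at p3
    have e1 := hre u (v + w)
    rw [← add_assoc] at e1
    have e2 := hre u v
    have e3 := hre u w
    linarith
  refine ⟨fun u => { toFun := γ u, map_add' := fun v w => ?_, map_smul' := fun z v => ?_ },
    fun u v => ?_, fun v => ?_⟩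
  · refine hext _ _ (Complex.I * γ u v + Complex.I * γ u w) _ (by rw [hadd]; rfl) ?_
      (by simp [add_comm])
    rw [smul_add, hadd, hsm, hsm]; rfl
  · refine hext _ _ (Complex.I * z * γ u v) _ (hsm _ _ _) ?_ (by simp)
    rw [smul_smul, hsm]
  · change γ v u = conj (γ u v)
    have e1 := hre u v
    have e2 := hre v u
    have e3 := him v u
    have e4 := hγ u v Complex.I 1
    rw [add_comm] at e2
    rw [one_smul, add_comm] at e4
    simp only [norm_one, Complex.norm_I, Complex.conj_I, mul_one, neg_mul, Complex.neg_re,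
      Complex.I_mul_re, neg_neg, one_pow, one_mul] at e4
    apply Complex.ext
    · rw [Complex.conj_re]; linarith
    · rw [Complex.conj_im]; linarith
  · change γ v v = F v
    have e1 := hγ v v 1 1
    have e2 := him v v
    have e3 : F (v + Complex.I • v) = 2 * F v := by
      rw [show v + Complex.I • v = (1 + Complex.I) • v by module, hom,
        ← Complex.normSq_eq_norm_sq, Complex.normSq_apply]
      simp only [Complex.add_re, Complex.add_im, Complex.one_re, Complex.one_im, Complex.I_re,
        Complex.I_im]
      ring
    rw [← add_smul, hom] at e1
    norm_num at e1
    apply Complex.ext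
    · rw [Complex.ofReal_re]; linarith
    · rw [Complex.ofReal_im]; linarith

end Sesquilinear

/-! ### Measures on projections -/

section Projections

open ComplexConjugate

variable {n : ℕ}

/-- The orthogonal projection onto the line through `v`; it is `0` for `v = 0`. -/
noncomputable def lineProj (v : EuclideanSpace ℂ (Fin n)) : Matrix (Fin n) (Fin n) ℂ :=
  ((‖v‖ ^ 2)⁻¹ : ℂ) • vecMulVec v.ofLp (star v.ofLp)

lemma lineProj_apply (v : EuclideanSpace ℂ (Fin n)) (k l : Fin n) :
    lineProj v k l = v k * conj (v l) / ‖v‖ ^ 2 := by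
  simp only [lineProj, Matrix.smul_apply, vecMulVec_apply, smul_eq_mul, Pi.star_apply, starRingEnd_apply]
  ring

lemma star_dotProduct_eq_inner (u v : EuclideanSpace ℂ (Fin n)) :
    star u.ofLp ⬝ᵥ v.ofLp = inner ℂ u v := by
  rw [EuclideanSpace.inner_eq_star_dotProduct, dotProduct_comm]

lemma star_dotProduct_self (v : EuclideanSpace ℂ (Fin n)) :
    star v.ofLp ⬝ᵥ v.ofLp = (‖v‖ : ℂ) ^ 2 := by
  rw [star_dotProduct_eq_inner, inner_self_eq_norm_sq_to_K]; rfl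

lemma lineProj_mul (u v : EuclideanSpace ℂ (Fin n)) (h : inner ℂ u v = 0) :
    lineProj u * lineProj v = 0 := by
  rw [lineProj, lineProj, smul_mul_smul_comm, vecMulVec_mul_vecMulVec, star_dotProduct_eq_inner, h]
  simp

lemma isProjection_lineProj (v : EuclideanSpace ℂ (Fin n)) : IsProjection (lineProj v) := by
  constructor
  · ext k l
    rw [conjTranspose_apply, lineProj_apply, lineProj_apply, ← starRingEnd_apply]
    simp [mul_comm]
  · by_cases hv : v = 0
    · simp [lineProj, hv]
    have hv' : (‖v‖ : ℂ) ≠ 0 := by simpa using hv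
    rw [lineProj, smul_mul_smul_comm, vecMulVec_mul_vecMulVec, star_dotProduct_self]
    rw [vecMulVec_smul, smul_smul]
    congr 1
    field_simp

lemma lineProj_smul {z : ℂ} (hz : z ≠ 0) (v : EuclideanSpace ℂ (Fin n)) :
    lineProj (z • v) = lineProj v := by
  ext k l
  rw [lineProj_apply, lineProj_apply, norm_smul]
  have hz' : (‖z‖ : ℂ) ≠ 0 := by simpa using hz
  have h : z * conj z = (‖z‖ : ℂ) ^ 2 := Complex.mul_conj' z
  simp only [PiLp.smul_apply, smul_eq_mul, map_mul]
  push_cast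
  rw [show z * v k * (conj z * conj (v l)) = z * conj z * (v k * conj (v l)) by ring, h, mul_pow,
    mul_div_mul_left _ _ (pow_ne_zero 2 hz')]

lemma trace_mul_lineProj (A : Matrix (Fin n) (Fin n) ℂ) (v : EuclideanSpace ℂ (Fin n)) :
    (A * lineProj v).trace = (star v.ofLp ⬝ᵥ A *ᵥ v.ofLp) / (‖v‖ : ℂ) ^ 2 := by
  rw [lineProj, Matrix.mul_smul, trace_smul, mul_vecMulVec, trace_vecMulVec, dotProduct_comm, smul_eq_mul]
  ring

lemma isProjection_add {P Q : Matrix (Fin n) (Fin n) ℂ} (hP : IsProjection P)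
    (hQ : IsProjection Q) (h : P * Q = 0) : IsProjection (P + Q) := by
  have h' : Q * P = 0 := by
    have := congrArg conjTranspose h
    rwa [conjTranspose_mul, hP.1, hQ.1, conjTranspose_zero] at this
  refine ⟨by rw [conjTranspose_add, hP.1, hQ.1], ?_⟩
  rw [add_mul, mul_add, mul_add, hP.2, hQ.2, h, h', add_zero, zero_add]

/-- Every orthogonal projection is the sum of the line projections of some of the vectors of an
orthonormal basis. -/
lemma exists_eq_sum_lineProj {P : Matrix (Fin n) (Fin n) ℂ} (hP : IsProjection P) :
    ∃ (b : OrthonormalBasis (Fin n) ℂ (EuclideanSpace ℂ (Fin n))) (s : Finset (Fin n)),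
      P = ∑ i ∈ s, lineProj (b i) := by
  have hH : P.IsHermitian := hP.1
  set b := hH.eigenvectorBasis with hb
  refine ⟨b, Finset.univ.filter fun i => hH.eigenvalues i = 1, ?_⟩
  have hev : ∀ j, hH.eigenvalues j = 1 ∨ hH.eigenvalues j = 0 := by
    intro j
    have h1 := hH.mulVec_eigenvectorBasis j
    have h2 : P *ᵥ (P *ᵥ (b j).ofLp) = P *ᵥ (b j).ofLp := by rw [mulVec_mulVec, hP.2]
    rw [h1, mulVec_smul, h1, smul_smul] at h2
    have hne : (b j).ofLp ≠ 0 := by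
      simpa using b.orthonormal.ne_zero j
    have h3 := smul_left_injective ℝ hne h2
    by_cases h0 : hH.eigenvalues j = 0
    · exact Or.inr h0
    · exact Or.inl (mul_left_cancel₀ h0 (by rw [mul_one]; exact h3))
  have key : ∀ j, P *ᵥ (b j).ofLp
      = (∑ i ∈ Finset.univ.filter fun i => hH.eigenvalues i = 1, lineProj (b i)) *ᵥ (b j).ofLp := by
    intro j
    have hl : ∀ i, lineProj (b i) *ᵥ (b j).ofLp = if i = j then (b j).ofLp else 0 := by
      intro i
      rw [lineProj, smul_mulVec, vecMulVec_mulVec, star_dotProduct_eq_inner, b.inner_eq_ite,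
        b.norm_eq_one]
      split_ifs with h
      · simp [h]
      · simp
    rw [sum_mulVec, Finset.sum_congr rfl fun i _ => hl i, Finset.sum_ite_eq',
      hH.mulVec_eigenvectorBasis j]
    rcases hev j with h | h <;> simp [h, hb]
  apply (toEuclideanLin (𝕜 := ℂ)).injective
  refine b.toBasis.ext fun j => ?_
  rw [b.coe_toBasis]
  ext k
  exact congrFun (key j) k

variable {m : Matrix (Fin n) (Fin n) ℂ → ℝ}

lemma measure_sum (hadd : ∀ P Q, IsProjection P → IsProjection Q → P * Q = 0 →
      m (P + Q) = m P + m Q)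
    (b : OrthonormalBasis (Fin n) ℂ (EuclideanSpace ℂ (Fin n))) (s : Finset (Fin n)) :
    IsProjection (∑ i ∈ s, lineProj (b i)) ∧
      m (∑ i ∈ s, lineProj (b i)) = ∑ i ∈ s, m (lineProj (b i)) := by
  induction s using Finset.induction_on with
  | empty =>
    have h0 : IsProjection (0 : Matrix (Fin n) (Fin n) ℂ) := ⟨by simp, by simp⟩
    have := hadd 0 0 h0 h0 (by simp)
    rw [add_zero] at this
    simp only [Finset.sum_empty]
    exact ⟨h0, by linarith⟩
  | insert i s hi ih =>
    have horth : lineProj (b i) * ∑ j ∈ s, lineProj (b j) = 0 := by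
      rw [Finset.mul_sum]
      refine Finset.sum_eq_zero fun j hj => lineProj_mul _ _ ?_
      rw [b.inner_eq_ite, if_neg (by rintro rfl; exact hi hj)]
    rw [Finset.sum_insert hi, Finset.sum_insert hi]
    refine ⟨isProjection_add (isProjection_lineProj _) ih.1 horth, ?_⟩
    rw [hadd _ _ (isProjection_lineProj _) ih.1 horth, ih.2]

/-- The real-linear map from `ℝ³` that sends the coordinate vectors to `u`; it is isometric when `u`
is orthonormal. -/
noncomputable def embed (u : Fin 3 → EuclideanSpace ℂ (Fin n)) (x : E) :
    EuclideanSpace ℂ (Fin n) :=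
  (x 0 : ℂ) • u 0 + (x 1 : ℂ) • u 1 + (x 2 : ℂ) • u 2

lemma inner_embed {u : Fin 3 → EuclideanSpace ℂ (Fin n)} (hu : Orthonormal ℂ u) (x y : E) :
    inner ℂ (embed u x) (embed u y) = ((inner ℝ x y : ℝ) : ℂ) := by
  have h := orthonormal_iff_ite.1 hu
  have e : (inner ℝ x y : ℝ) = x 0 * y 0 + x 1 * y 1 + x 2 * y 2 := by
    conv_lhs => rw [vec_eta x, vec_eta y, inner_vec]
  simp only [embed, inner_add_left, inner_add_right, inner_smul_left, inner_smul_right, h,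
    Complex.conj_ofReal, e]
  simp
  ring

lemma norm_embed {u : Fin 3 → EuclideanSpace ℂ (Fin n)} (hu : Orthonormal ℂ u) (x : E) :
    ‖embed u x‖ ^ 2 = ‖x‖ ^ 2 := by
  rw [← inner_self_eq_norm_sq (𝕜 := ℂ), inner_embed hu, ← real_inner_self_eq_norm_sq]
  exact Complex.ofReal_re _

/-- The lines of an orthogonal triple in the real span of `u` have the same complex span as `u`. -/
lemma sum_lineProj_embed {u : Fin 3 → EuclideanSpace ℂ (Fin n)} (hu : Orthonormal ℂ u)
    {a b c : E} (ha : a ≠ 0) (hb : b ≠ 0) (hc : c ≠ 0)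
    (hab : inner ℝ a b = 0) (hac : inner ℝ a c = 0) (hbc : inner ℝ b c = 0) :
    lineProj (embed u a) + lineProj (embed u b) + lineProj (embed u c)
      = lineProj (u 0) + lineProj (u 1) + lineProj (u 2) := by
  have hp := fun i j => congrArg (fun r : ℝ => (r : ℂ))
    (parseval_coord ha hb hc hab hac hbc i j)
  have h00 := hp 0 0
  have h11 := hp 1 1
  have h22 := hp 2 2
  have h01 := hp 0 1
  have h02 := hp 0 2
  have h12 := hp 1 2
  rw [if_pos rfl] at h00 h11 h22
  rw [if_neg (by decide)] at h01 h02 h12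
  push_cast at h00 h11 h22 h01 h02 h12
  have hn : ∀ x, (‖embed u x‖ : ℂ) ^ 2 = (‖x‖ : ℂ) ^ 2 := fun x => by
    exact_mod_cast norm_embed hu x
  ext k l
  simp only [Matrix.add_apply, lineProj_apply, hn, hu.1]
  simp only [embed, PiLp.add_apply, PiLp.smul_apply,
    smul_eq_mul, map_add, map_mul, Complex.conj_ofReal]
  push_cast
  linear_combination (u 0 k * conj (u 0 l)) * h00 + (u 1 k * conj (u 1 l)) * h11
    + (u 2 k * conj (u 2 l)) * h22 + (u 0 k * conj (u 1 l) + u 1 k * conj (u 0 l)) * h01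
    + (u 0 k * conj (u 2 l) + u 2 k * conj (u 0 l)) * h02
    + (u 1 k * conj (u 2 l) + u 2 k * conj (u 1 l)) * h12

/-- The measure of a line in the real span of an orthonormal triple is a frame function. -/
lemma isFrame_embed (hadd : ∀ P Q, IsProjection P → IsProjection Q → P * Q = 0 →
      m (P + Q) = m P + m Q)
    {u : Fin 3 → EuclideanSpace ℂ (Fin n)} (hu : Orthonormal ℂ u) :
    IsFrame (fun x => m (lineProj (embed u x)))
      (m (lineProj (u 0) + lineProj (u 1) + lineProj (u 2))) := by
  intro a b c ha hb hc hab hac hbc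
  have h1 : lineProj (embed u a) * lineProj (embed u b) = 0 :=
    lineProj_mul _ _ (by rw [inner_embed hu, hab]; rfl)
  have h2 : lineProj (embed u a) * lineProj (embed u c) = 0 :=
    lineProj_mul _ _ (by rw [inner_embed hu, hac]; rfl)
  have h3 : lineProj (embed u b) * lineProj (embed u c) = 0 :=
    lineProj_mul _ _ (by rw [inner_embed hu, hbc]; rfl)
  have hP := fun x => isProjection_lineProj (embed u x)
  rw [← sum_lineProj_embed hu ha hb hc hab hac hbc,
    hadd _ _ (isProjection_add (hP a) (hP b) h1) (hP c) (by rw [add_mul, h2, h3, add_zero]),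
    hadd _ _ (hP a) (hP b) h1]

/-- In dimension at least three, an orthonormal pair extends to an orthonormal triple. -/
lemma exists_triple (hn : 3 ≤ n) {a b : EuclideanSpace ℂ (Fin n)} (ha : ‖a‖ = 1) (hb : ‖b‖ = 1)
    (hab : inner ℂ a b = 0) : ∃ c : EuclideanSpace ℂ (Fin n), Orthonormal ℂ ![a, b, c] := by
  have hfin : Module.finrank ℂ (Submodule.span ℂ (Set.range ![a, b])) ≤ 2 := by
    exact (finrank_range_le_card (R := ℂ) ![a, b]).trans (by simp)
  have hne : Submodule.span ℂ (Set.range ![a, b]) ≠ ⊤ := by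
    intro h
    rw [h, finrank_top, finrank_euclideanSpace_fin] at hfin
    omega
  obtain ⟨w, hw, hw0⟩ := (Submodule.ne_bot_iff _).1 fun h => hne (Submodule.orthogonal_eq_bot_iff.1 h)
  have h1 : inner ℂ a w = 0 := hw a (Submodule.subset_span ⟨0, rfl⟩)
  have h2 : inner ℂ b w = 0 := hw b (Submodule.subset_span ⟨1, rfl⟩)
  have hba := inner_eq_zero_symm.1 hab
  have h1' := inner_eq_zero_symm.1 h1
  have h2' := inner_eq_zero_symm.1 h2
  have hw' : ‖w‖ ≠ 0 := norm_ne_zero_iff.2 hw0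
  refine ⟨((‖w‖⁻¹ : ℝ) : ℂ) • w, ?_⟩
  have hcc : ‖((‖w‖⁻¹ : ℝ) : ℂ) • w‖ = 1 := by simp [norm_smul, hw']
  constructor
  · intro i
    fin_cases i
    · exact ha
    · exact hb
    · exact hcc
  · intro i j hij
    fin_cases i <;> fin_cases j <;>
      simp [inner_smul_left, inner_smul_right, hab, hba, h1, h2, h1', h2'] at hij ⊢

/-- By `real_gleason`, applied to a triple extending `a`, `b`, the function `‖v‖² m(P_v)` is quadratic
on the real span of `a` and `b`. -/
lemma exists_cross_term (hn : 3 ≤ n) (hm0 : ∀ P, IsProjection P → 0 ≤ m P)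
    (hadd : ∀ P Q, IsProjection P → IsProjection Q → P * Q = 0 → m (P + Q) = m P + m Q)
    (a b : EuclideanSpace ℂ (Fin n)) (ha : ‖a‖ = 1) (hb : ‖b‖ = 1) (hab : inner ℂ a b = 0) :
    ∃ C : ℝ, ∀ x y : ℝ,
      ‖(x : ℂ) • a + (y : ℂ) • b‖ ^ 2 * m (lineProj ((x : ℂ) • a + (y : ℂ) • b))
      = x ^ 2 * (‖a‖ ^ 2 * m (lineProj a)) + y ^ 2 * (‖b‖ ^ 2 * m (lineProj b)) + x * y * C := by
  obtain ⟨c, hu⟩ := exists_triple hn ha hb hab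
  obtain ⟨A, hA⟩ := real_gleason (isFrame_embed hadd hu) (k := 0)
    fun v _ => hm0 _ (isProjection_lineProj _)
  have hval : ∀ x y : ℝ,
      ‖(x : ℂ) • a + (y : ℂ) • b‖ ^ 2 * m (lineProj ((x : ℂ) • a + (y : ℂ) • b))
      = x ^ 2 * inner ℝ (vec 1 0 0) (A (vec 1 0 0)) + y ^ 2 * inner ℝ (vec 0 1 0) (A (vec 0 1 0))
        + x * y * (inner ℝ (vec 1 0 0) (A (vec 0 1 0)) + inner ℝ (vec 0 1 0) (A (vec 1 0 0))) := by
    intro x y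
    have he : embed ![a, b, c] (vec x y 0) = (x : ℂ) • a + (y : ℂ) • b := by
      simp [embed]
    have hq : ‖embed ![a, b, c] (vec x y 0)‖ ^ 2 * m (lineProj (embed ![a, b, c] (vec x y 0)))
        = inner ℝ (vec x y 0) (A (vec x y 0)) := by
      rw [norm_embed hu]
      by_cases h0 : vec x y 0 = 0
      · rw [h0]; simp
      · exact hA _ h0
    have hv : vec x y 0 = x • vec 1 0 0 + y • vec 0 1 0 := by
      rw [smul_vec, smul_vec, add_vec]; simp
    rw [← he, hq, hv]
    simp only [map_add, map_smul, inner_add_left, inner_add_right, inner_smul_left,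
      inner_smul_right, conj_trivial]
    ring
  refine ⟨inner ℝ (vec 1 0 0) (A (vec 0 1 0)) + inner ℝ (vec 0 1 0) (A (vec 1 0 0)),
    fun x y => ?_⟩
  have h1 := hval 1 0
  have h2 := hval 0 1
  simp only [Complex.ofReal_one, Complex.ofReal_zero, one_smul, zero_smul, add_zero,
    zero_add] at h1 h2
  rw [hval x y, h1, h2]
  ring

end Projections

end Gleason

open Gleason in
/-- Gleason's theorem for `M_n(ℂ)`, `n ≥ 3`: every finitely
additive probability measure on the orthogonal projections extends uniquely
to a density matrix, i.e. there is a unique density matrix `ρ` with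
`m(P) = Tr(ρ P)` for all projections `P`. -/
theorem gleason_finite_dimensional (n : ℕ) (hn : 3 ≤ n)
    (m : Matrix (Fin n) (Fin n) ℂ → ℝ)
    (hm01 : ∀ P, IsProjection P → m P ∈ Set.Icc (0 : ℝ) 1)
    (hmI : m 1 = 1)
    (hadd : ∀ P Q, IsProjection P → IsProjection Q → P * Q = 0 →
      m (P + Q) = m P + m Q) :
    ∃! ρ : Matrix (Fin n) (Fin n) ℂ, IsDensityMatrix ρ ∧
      ∀ P, IsProjection P → m P = ((ρ * P).trace).re := by
  have hm0 : ∀ P, IsProjection P → 0 ≤ m P := fun P hP => (hm01 P hP).1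
  -- `‖v‖² m(P_v)` is the diagonal of a Hermitian form `h`
  obtain ⟨h, hsymm, hdiag⟩ := exists_form
    (F := fun v : EuclideanSpace ℂ (Fin n) => ‖v‖ ^ 2 * m (lineProj v))
    (fun z v => by
      by_cases hz : z = 0
      · simp [hz]
      · simp only [lineProj_smul hz, norm_smul]; ring)
    (exists_cross_term hn hm0 hadd)
  set e := EuclideanSpace.basisFun (Fin n) ℂ with he
  set ρ : Matrix (Fin n) (Fin n) ℂ := Matrix.of fun j k => h (e j) (e k) with hρ
  have hherm : ρ.IsHermitian := by
    ext j k
    rw [conjTranspose_apply]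
    exact (hsymm _ _).symm
  have hlin : ∀ u v : EuclideanSpace ℂ (Fin n), h u v = ∑ k, v k * h u (e k) := by
    intro u v
    conv_lhs => rw [← e.sum_repr v]
    simp [he]
  have hform : ∀ v : EuclideanSpace ℂ (Fin n), star v.ofLp ⬝ᵥ ρ *ᵥ v.ofLp = h v v := by
    intro v
    have h1 : ∀ j, (ρ *ᵥ v.ofLp) j = h (e j) v := by
      intro j
      rw [hlin (e j) v]
      simp only [mulVec, dotProduct, hρ, Matrix.of_apply]
      exact Finset.sum_congr rfl fun k _ => mul_comm _ _
    have h2 : h v v = star (∑ k, v k * h v (e k)) := by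
      rw [← hlin]; exact hsymm v v
    rw [h2, star_sum]
    simp only [dotProduct, h1]
    refine Finset.sum_congr rfl fun k _ => ?_
    rw [star_mul', hsymm v (e k)]; rfl
  have htr : ∀ v : EuclideanSpace ℂ (Fin n), v ≠ 0 →
      (ρ * lineProj v).trace = (m (lineProj v) : ℂ) := by
    intro v hv
    have hv' : (‖v‖ : ℂ) ≠ 0 := by simpa using hv
    rw [trace_mul_lineProj, hform, hdiag]
    push_cast
    field_simp
  have hval : ∀ P, IsProjection P → (ρ * P).trace = (m P : ℂ) := by
    intro P hP
    obtain ⟨b, s, rfl⟩ := exists_eq_sum_lineProj hP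
    rw [(measure_sum hadd b s).2, Finset.mul_sum, trace_sum]
    push_cast
    exact Finset.sum_congr rfl fun i _ => htr _ (b.orthonormal.ne_zero i)
  refine ⟨ρ, ⟨⟨?_, ?_⟩, fun P hP => by rw [hval P hP, Complex.ofReal_re]⟩, ?_⟩
  · refine Matrix.PosSemidef.of_dotProduct_mulVec_nonneg hherm fun x => ?_
    have := hform (WithLp.toLp 2 x)
    rw [hdiag] at this
    simp only at this
    rw [this]
    exact_mod_cast mul_nonneg (sq_nonneg _) (hm0 _ (isProjection_lineProj _))
  · have := hval 1 ⟨by simp, by simp⟩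
    rwa [mul_one, hmI, Complex.ofReal_one] at this
  · rintro σ ⟨⟨hσ, -⟩, hσm⟩
    by_contra hne
    -- a nonzero Hermitian difference has an eigenvector with nonzero eigenvalue `t`, and the
    -- projection onto its line tells `σ` from `ρ`
    obtain ⟨x, t, ht, hx, hxt⟩ :=
      (hσ.isHermitian.sub hherm).exists_eigenvector_of_ne_zero (sub_ne_zero.2 hne)
    set v : EuclideanSpace ℂ (Fin n) := WithLp.toLp 2 x with hv
    have hv0 : (‖v‖ : ℂ) ≠ 0 := by simpa [hv] using hx
    have h1 := hσm _ (isProjection_lineProj v)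
    have h2 : ((σ - ρ) * lineProj v).trace = t := by
      rw [trace_mul_lineProj, hxt, dotProduct_smul, star_dotProduct_self, Complex.real_smul,
        mul_div_assoc, div_self (pow_ne_zero 2 hv0), mul_one]
    rw [sub_mul, trace_sub, hval _ (isProjection_lineProj v)] at h2
    have h3 := congrArg Complex.re h2
    simp only [Complex.sub_re, Complex.ofReal_re] at h3
    exact ht (by linarith)
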